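/- Suppose there exist θ^L < θ^H in (0,1) such that, wherever u'' exists, u''(θ) < 0 for θ ∈ [0,θ^L), u''(θ) > 0 for θ ∈ (θ^L,θ^H), and u''(θ) < 0 for θ ∈ (θ^H,1]. Suppose there is no pair θ_*^L < θ_*^H in (θ^L,θ^H) satisfying u(m^L) + u'(m^L)·(θ_*^L − m^L) = u(θ_*^L) and u(m^H) + u'(m^H)·(θ_*^H − m^H) = u(θ_*^H) with m^L = E_F[θ|(0,θ_*^L)], m^H = E_F[θ|(θ_*^H,1)], and suppose there is no θ_*^M ∈ (0,1) satisfying both u(m^L) + u'(m^L)·(θ_*^M − m^L) = u(m^H) + u'(m^H)·(θ_*^M − m^H) and u(m^L)·F(θ_*^M) + u(m^H)·(1 − F(θ_*^M)) ≥ u(E_F[θ]) with m^L = E_F[θ|(0,θ_*^M)], m^H = E_F[θ|(θ_*^M,1)]. Then complete pooling P_* = [0,1] is optimal for u. -/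

import Mathlib

open MeasureTheory Set
open scoped Classical

noncomputable section

/-- CDF associated with the density `f` (relevant on `[0,1]`): `F(x) = ∫_0^x f`. -/
def cdfF (f : ℝ → ℝ) (x : ℝ) : ℝ := ∫ t in (0:ℝ)..x, f t

/-- Conditional mean `E_F[θ | (ξ,ζ)]` of `θ` on the interval `(ξ, ζ)` under density `f`. -/
def condMean (f : ℝ → ℝ) (ξ ζ : ℝ) : ℝ :=
  (∫ t in ξ..ζ, t * f t) / (∫ t in ξ..ζ, f t)

/-- `f` is a strictly positive density of a probability measure on `[0,1]`. -/
def IsDensity (f : ℝ → ℝ) : Prop :=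
  (∀ θ ∈ Icc (0:ℝ) 1, 0 < f θ) ∧ IntegrableOn f (Icc (0:ℝ) 1) ∧
    (∫ t in (0:ℝ)..1, f t) = 1

/-- An open pooling set: a relatively open subset of `[0,1]`. -/
def IsPoolingSet (P : Set ℝ) : Prop :=
  ∃ U : Set ℝ, IsOpen U ∧ P = U ∩ Icc (0:ℝ) 1

/-- Left endpoint `ξ_i` of the interval component of `θ` in `P`. -/
def compInf (P : Set ℝ) (θ : ℝ) : ℝ := sInf (connectedComponentIn P θ)

/-- Right endpoint `ζ_i` of the interval component of `θ` in `P`. -/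
def compSup (P : Set ℝ) (θ : ℝ) : ℝ := sSup (connectedComponentIn P θ)

/-- The posterior-mean map induced by the pooling set `P`: states in a pooled
interval are mapped to the conditional mean of that interval, other states to
themselves. -/
def poolMean (f : ℝ → ℝ) (P : Set ℝ) (θ : ℝ) : ℝ :=
  if θ ∈ P then condMean f (compInf P θ) (compSup P θ) else θ

/-- The induced distribution `G_P` of posterior means. -/
def Gp (f : ℝ → ℝ) (P : Set ℝ) (θ : ℝ) : ℝ :=
  if θ ∈ P then
    (if θ < condMean f (compInf P θ) (compSup P θ) then cdfF f (compInf P θ)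
     else cdfF f (compSup P θ))
  else cdfF f θ

/-- `Γ_P(θ) = ∫_0^θ G_P(t) dt`. -/
def Gam (f : ℝ → ℝ) (P : Set ℝ) (θ : ℝ) : ℝ := ∫ t in (0:ℝ)..θ, Gp f P t

/-- The value `∫_0^1 u(θ) dG_P(θ)` of the pooling set `P` under payoff `u`,
written as the expectation of `u` composed with the posterior-mean map. -/
def poolValue (f : ℝ → ℝ) (u : ℝ → ℝ) (P : Set ℝ) : ℝ :=
  ∫ θ in (0:ℝ)..1, u (poolMean f P θ) * f θ

/-- `P` is an optimal pooling set for `u`. -/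
def IsOptimal (f : ℝ → ℝ) (u : ℝ → ℝ) (P : Set ℝ) : Prop :=
  IsPoolingSet P ∧ ∀ Q : Set ℝ, IsPoolingSet Q → poolValue f u Q ≤ poolValue f u P

/-- `u` is continuously differentiable on `[0,1]` with derivative `u'`, and `u'`
is absolutely continuous with integrable a.e. derivative `u''` (encoded via the
fundamental theorem of calculus). -/
def C1AC (u u' u'' : ℝ → ℝ) : Prop :=
  (∀ θ ∈ Icc (0:ℝ) 1, HasDerivAt u (u' θ) θ) ∧
  ContinuousOn u' (Icc (0:ℝ) 1) ∧
  IntegrableOn u'' (Icc (0:ℝ) 1) ∧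
  (∀ θ ∈ Icc (0:ℝ) 1, u' θ = u' 0 + ∫ t in (0:ℝ)..θ, u'' t)



def massI (f : ℝ → ℝ) (x y : ℝ) : ℝ := ∫ t in x..y, f t

def momI (f : ℝ → ℝ) (x y : ℝ) : ℝ := ∫ t in x..y, t * f t

/-- value of pooling the interval `(x,y)`. -/
def WI (f u : ℝ → ℝ) (x y : ℝ) : ℝ := massI f x y * u (condMean f x y)

/-- tangent line -/
def tl (u u' : ℝ → ℝ) (m t : ℝ) : ℝ := u m + u' m * (t - m)

structure Dens (f : ℝ → ℝ) : Prop where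
  pos : ∀ θ ∈ Icc (0:ℝ) 1, 0 < f θ
  int : IntervalIntegrable f volume 0 1
  one : massI f 0 1 = 1

structure Setup (f u u' : ℝ → ℝ) (θL θH : ℝ) : Prop where
  dens : Dens f
  der : ∀ θ ∈ Icc (0:ℝ) 1, HasDerivAt u (u' θ) θ
  cont : ContinuousOn u' (Icc (0:ℝ) 1)
  h0 : 0 < θL
  h1 : θL < θH
  h2 : θH < 1
  a1 : StrictAntiOn u' (Icc 0 θL)
  a2 : StrictMonoOn u' (Icc θL θH)
  a3 : StrictAntiOn u' (Icc θH 1)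
  nopair : ¬ ∃ x ∈ Ioo θL θH, ∃ y ∈ Ioo θL θH, x < y ∧
      tl u u' (condMean f 0 x) x = u x ∧ tl u u' (condMean f y 1) y = u y

lemma Dens.ii {f : ℝ → ℝ} (D : Dens f) {x y : ℝ} (hx : 0 ≤ x) (hxy : x ≤ y) (hy : y ≤ 1) :
    IntervalIntegrable f volume x y := by
  apply D.int.mono_set
  rw [uIcc_of_le hxy, uIcc_of_le zero_le_one]
  exact Icc_subset_Icc hx hy

lemma Dens.iic {f : ℝ → ℝ} (D : Dens f) {x y : ℝ} (hx : 0 ≤ x) (hxy : x ≤ y) (hy : y ≤ 1)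
    {g : ℝ → ℝ} (hg : ContinuousOn g (Icc x y)) :
    IntervalIntegrable (fun t => g t * f t) volume x y := by
  apply (D.ii hx hxy hy).continuousOn_mul
  rwa [uIcc_of_le hxy]

lemma Dens.mass_pos {f : ℝ → ℝ} (D : Dens f) {x y : ℝ} (hx : 0 ≤ x) (hxy : x < y) (hy : y ≤ 1) :
    0 < massI f x y := by
  apply intervalIntegral.intervalIntegral_pos_of_pos_on (D.ii hx hxy.le hy) _ hxy
  intro t ht
  exact D.pos t ⟨hx.trans ht.1.le, ht.2.le.trans hy⟩

lemma Dens.mass_nonneg {f : ℝ → ℝ} (D : Dens f) {x y : ℝ} (hx : 0 ≤ x) (hxy : x ≤ y)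
    (hy : y ≤ 1) : 0 ≤ massI f x y := by
  rcases hxy.eq_or_lt with h | h
  · subst h; simp [massI]
  · exact (D.mass_pos hx h hy).le

lemma Dens.mass_mul {f : ℝ → ℝ} (D : Dens f) {x y : ℝ} (hx : 0 ≤ x) (hxy : x ≤ y) (hy : y ≤ 1) :
    massI f x y * condMean f x y = momI f x y := by
  rcases hxy.eq_or_lt with h | h
  · subst h; simp [massI, momI]
  · have := (D.mass_pos hx h hy).ne'
    unfold condMean
    change massI f x y * (momI f x y / massI f x y) = _
    field_simp

lemma Dens.int_aff {f : ℝ → ℝ} (D : Dens f) {x y : ℝ} (hx : 0 ≤ x) (hxy : x ≤ y) (hy : y ≤ 1)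
    (α β : ℝ) : ∫ t in x..y, (α + β * t) * f t = α * massI f x y + β * momI f x y := by
  have : ∀ t, (α + β * t) * f t = α * f t + β * (t * f t) := fun t => by ring
  simp_rw [this]
  rw [intervalIntegral.integral_add ((D.ii hx hxy hy).const_mul _)
    ((D.iic (g := fun t => t) hx hxy hy continuousOn_id).const_mul _)]
  simp [massI, momI]

lemma Dens.int_tl {f : ℝ → ℝ} (D : Dens f) {x y : ℝ} (hx : 0 ≤ x) (hxy : x ≤ y) (hy : y ≤ 1)
    (u u' : ℝ → ℝ) (m : ℝ) :
    ∫ t in x..y, tl u u' m t * f t = massI f x y * tl u u' m (condMean f x y) := by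
  have h := D.int_aff hx hxy hy (u m - u' m * m) (u' m)
  have e : ∀ t, tl u u' m t * f t = ((u m - u' m * m) + u' m * t) * f t := by
    intro t; unfold tl; ring
  simp_rw [e]
  rw [h, ← D.mass_mul hx hxy hy]
  unfold tl; ring

lemma Dens.cm_mem {f : ℝ → ℝ} (D : Dens f) {x y : ℝ} (hx : 0 ≤ x) (hxy : x < y) (hy : y ≤ 1) :
    condMean f x y ∈ Ioo x y := by
  have hp := D.mass_pos hx hxy hy
  have hm := D.mass_mul hx hxy.le hy
  have e1 := D.int_aff hx hxy.le hy (-x) 1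
  have e2 := D.int_aff hx hxy.le hy y (-1)
  have p1 : 0 < ∫ t in x..y, (-x + 1 * t) * f t := by
    apply intervalIntegral.intervalIntegral_pos_of_pos_on
      (D.iic hx hxy.le hy (by fun_prop)) _ hxy
    intro t ht
    have := D.pos t ⟨hx.trans ht.1.le, ht.2.le.trans hy⟩
    have := ht.1
    apply mul_pos _ ‹_›
    linarith
  have p2 : 0 < ∫ t in x..y, (y + (-1) * t) * f t := by
    apply intervalIntegral.intervalIntegral_pos_of_pos_on
      (D.iic hx hxy.le hy (by fun_prop)) _ hxy
    intro t ht
    have := D.pos t ⟨hx.trans ht.1.le, ht.2.le.trans hy⟩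
    have := ht.2
    apply mul_pos _ ‹_›
    linarith
  rw [e1, ← hm] at p1
  rw [e2, ← hm] at p2
  constructor
  · have : 0 < massI f x y * (condMean f x y - x) := by linarith
    have := (mul_pos_iff_of_pos_left hp).1 this
    linarith
  · have : 0 < massI f x y * (y - condMean f x y) := by linarith
    have := (mul_pos_iff_of_pos_left hp).1 this
    linarith

lemma Dens.mass_add {f : ℝ → ℝ} (D : Dens f) {x y z : ℝ} (hx : 0 ≤ x) (hxy : x ≤ y)
    (hyz : y ≤ z) (hz : z ≤ 1) : massI f x y + massI f y z = massI f x z :=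
  intervalIntegral.integral_add_adjacent_intervals (D.ii hx hxy (hyz.trans hz))
    (D.ii (hx.trans hxy) hyz hz)

lemma Dens.mom_add {f : ℝ → ℝ} (D : Dens f) {x y z : ℝ} (hx : 0 ≤ x) (hxy : x ≤ y)
    (hyz : y ≤ z) (hz : z ≤ 1) : momI f x y + momI f y z = momI f x z :=
  intervalIntegral.integral_add_adjacent_intervals
    (D.iic hx hxy (hyz.trans hz) continuousOn_id)
    (D.iic (hx.trans hxy) hyz hz continuousOn_id)

/-! ### Continuity -/

lemma Dens.mass_cont {f : ℝ → ℝ} (D : Dens f) :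
    ContinuousOn (fun x => massI f 0 x) (Icc 0 1) := by
  have := intervalIntegral.continuousOn_primitive_interval' (μ := volume) (f := f)
    (b₁ := 0) (b₂ := 1) (a := 0) D.int (by simp)
  rwa [uIcc_of_le zero_le_one] at this

lemma Dens.mom_cont {f : ℝ → ℝ} (D : Dens f) :
    ContinuousOn (fun x => momI f 0 x) (Icc 0 1) := by
  have := intervalIntegral.continuousOn_primitive_interval' (μ := volume) (f := fun t => t * f t)
    (b₁ := 0) (b₂ := 1) (a := 0) (D.iic le_rfl zero_le_one le_rfl continuousOn_id) (by simp)
  rwa [uIcc_of_le zero_le_one] at this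

lemma Dens.cm_cont_left {f : ℝ → ℝ} (D : Dens f) :
    ContinuousOn (fun x => condMean f 0 x) (Ioc 0 1) := by
  apply ContinuousOn.div (D.mom_cont.mono Ioc_subset_Icc_self)
    (D.mass_cont.mono Ioc_subset_Icc_self)
  intro x hx
  exact (D.mass_pos le_rfl hx.1 hx.2).ne'

lemma Dens.cm_cont_lower {f : ℝ → ℝ} (D : Dens f) {b : ℝ} (hb : b ≤ 1) :
    ContinuousOn (fun x => condMean f x b) (Ico 0 b) := by
  have s : Ico 0 b ⊆ Icc (0:ℝ) 1 := fun x hx => ⟨hx.1, hx.2.le.trans hb⟩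
  have h : ContinuousOn (fun x => (momI f 0 b - momI f 0 x) / (massI f 0 b - massI f 0 x))
      (Ico 0 b) := by
    apply ContinuousOn.div (continuousOn_const.sub (D.mom_cont.mono s))
      (continuousOn_const.sub (D.mass_cont.mono s))
    intro x hx
    have := D.mass_pos hx.1 hx.2 hb
    have := D.mass_add le_rfl hx.1 hx.2.le hb
    change massI f 0 b - massI f 0 x ≠ 0
    have h3 : massI f 0 b - massI f 0 x = massI f x b := by linarith
    rw [h3]; positivity
  apply h.congr
  intro x hx
  have e1 := D.mass_add le_rfl hx.1 hx.2.le hb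
  have e2 := D.mom_add le_rfl hx.1 hx.2.le hb
  change momI f x b / massI f x b = _
  rw [← e1, ← e2]
  simp

/-! ### Tangent lines -/

lemma mvt_aux {u u' : ℝ → ℝ} {α β : ℝ} (hd : ∀ θ ∈ Icc α β, HasDerivAt u (u' θ) θ)
    {x y : ℝ} (hx : α ≤ x) (hxy : x < y) (hy : y ≤ β) :
    ∃ ξ ∈ Ioo x y, u y - u x = u' ξ * (y - x) := by
  obtain ⟨ξ, hξ, h⟩ := exists_hasDerivAt_eq_slope u u' hxy
    (fun t ht => (hd t ⟨hx.trans ht.1, ht.2.trans hy⟩).continuousAt.continuousWithinAt)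
    (fun t ht => hd t ⟨hx.trans ht.1.le, ht.2.le.trans hy⟩)
  refine ⟨ξ, hξ, ?_⟩
  rw [h]
  have : y - x ≠ 0 := by linarith
  field_simp

lemma tl_gt {u u' : ℝ → ℝ} {α β : ℝ} (hd : ∀ θ ∈ Icc α β, HasDerivAt u (u' θ) θ)
    (ha : StrictAntiOn u' (Icc α β)) {m t : ℝ} (hm : m ∈ Icc α β) (ht : t ∈ Icc α β)
    (hne : t ≠ m) : u t < tl u u' m t := by
  unfold tl
  rcases lt_or_gt_of_ne hne with h | h
  · obtain ⟨ξ, hξ, e⟩ := mvt_aux hd ht.1 h hm.2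
    have := ha ⟨ht.1.trans hξ.1.le, hξ.2.le.trans hm.2⟩ hm hξ.2
    nlinarith
  · obtain ⟨ξ, hξ, e⟩ := mvt_aux hd hm.1 h ht.2
    have := ha hm ⟨hm.1.trans hξ.1.le, hξ.2.le.trans ht.2⟩ hξ.1
    nlinarith

lemma tl_ge {u u' : ℝ → ℝ} {α β : ℝ} (hd : ∀ θ ∈ Icc α β, HasDerivAt u (u' θ) θ)
    (ha : StrictAntiOn u' (Icc α β)) {m t : ℝ} (hm : m ∈ Icc α β) (ht : t ∈ Icc α β) :
    u t ≤ tl u u' m t := by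
  by_cases h : t = m
  · subst h; simp [tl]
  · exact (tl_gt hd ha hm ht h).le

lemma tl_lt {u u' : ℝ → ℝ} {α β : ℝ} (hd : ∀ θ ∈ Icc α β, HasDerivAt u (u' θ) θ)
    (ha : StrictMonoOn u' (Icc α β)) {m t : ℝ} (hm : m ∈ Icc α β) (ht : t ∈ Icc α β)
    (hne : t ≠ m) : tl u u' m t < u t := by
  have := tl_gt (u := fun x => - u x) (u' := fun x => - u' x)
    (fun θ hθ => (hd θ hθ).neg) ha.neg hm ht hne
  unfold tl at *
  linarith

lemma tl_le {u u' : ℝ → ℝ} {α β : ℝ} (hd : ∀ θ ∈ Icc α β, HasDerivAt u (u' θ) θ)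
    (ha : StrictMonoOn u' (Icc α β)) {m t : ℝ} (hm : m ∈ Icc α β) (ht : t ∈ Icc α β) :
    tl u u' m t ≤ u t := by
  by_cases h : t = m
  · subst h; simp [tl]
  · exact (tl_lt hd ha hm ht h).le

/-- three point concavity -/
lemma conc3 {u u' : ℝ → ℝ} {α β : ℝ} (hd : ∀ θ ∈ Icc α β, HasDerivAt u (u' θ) θ)
    (ha : StrictAntiOn u' (Icc α β)) {x y z : ℝ} (hx : α ≤ x) (hxy : x ≤ y) (hyz : y ≤ z)
    (hz : z ≤ β) : u x * (z - y) + u z * (y - x) ≤ u y * (z - x) := by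
  have hy : y ∈ Icc α β := ⟨hx.trans hxy, hyz.trans hz⟩
  have e1 := tl_ge hd ha hy (t := x) ⟨hx, hxy.trans hy.2⟩
  have e2 := tl_ge hd ha hy (t := z) ⟨hy.1.trans hyz, hz⟩
  unfold tl at e1 e2
  nlinarith [mul_le_mul_of_nonneg_right e1 (sub_nonneg.2 hyz),
    mul_le_mul_of_nonneg_right e2 (sub_nonneg.2 hxy)]

lemma conv3 {u u' : ℝ → ℝ} {α β : ℝ} (hd : ∀ θ ∈ Icc α β, HasDerivAt u (u' θ) θ)
    (ha : StrictMonoOn u' (Icc α β)) {x y z : ℝ} (hx : α ≤ x) (hxy : x ≤ y) (hyz : y ≤ z)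
    (hz : z ≤ β) : u y * (z - x) ≤ u x * (z - y) + u z * (y - x) := by
  have := conc3 (u := fun x => - u x) (u' := fun x => - u' x)
    (fun θ hθ => (hd θ hθ).neg) ha.neg hx hxy hyz hz
  linarith

/-! ### Reflection -/

lemma refl_mass (f : ℝ → ℝ) (x y : ℝ) :
    massI (fun t => f (1 - t)) x y = massI f (1 - y) (1 - x) := by
  unfold massI
  rw [intervalIntegral.integral_comp_sub_left (fun t => f t) 1]

lemma Dens.reflect {f : ℝ → ℝ} (D : Dens f) : Dens (fun t => f (1 - t)) where
  pos := fun θ hθ => D.pos _ ⟨by linarith [hθ.2], by linarith [hθ.1]⟩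
  int := by
    have := D.int.comp_sub_left 1
    simp only [sub_zero, sub_self] at this
    exact this.symm
  one := by rw [refl_mass]; simpa using D.one

lemma Dens.refl_mom {f : ℝ → ℝ} (D : Dens f) {x y : ℝ} (hx : 0 ≤ x) (hxy : x ≤ y) (hy : y ≤ 1) :
    momI (fun t => f (1 - t)) x y = massI f (1 - y) (1 - x) - momI f (1 - y) (1 - x) := by
  have h := D.int_aff (x := 1 - y) (y := 1 - x) (by linarith) (by linarith) (by linarith) 1 (-1)
  have e : momI (fun t => f (1 - t)) x y = ∫ t in (1-y)..(1-x), (1 + (-1) * t) * f t := by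
    unfold momI
    rw [← intervalIntegral.integral_comp_sub_left (fun t => (1 + (-1) * t) * f t) 1]
    congr 1; ext t; ring
  rw [e, h]; ring

lemma Dens.refl_cm {f : ℝ → ℝ} (D : Dens f) {x y : ℝ} (hx : 0 ≤ x) (hxy : x < y) (hy : y ≤ 1) :
    condMean (fun t => f (1 - t)) x y = 1 - condMean f (1 - y) (1 - x) := by
  have hp := D.mass_pos (x := 1 - y) (y := 1 - x) (by linarith) (by linarith) (by linarith)
  change momI _ _ _ / massI _ _ _ = 1 - momI _ _ _ / massI _ _ _
  rw [D.refl_mom hx hxy.le hy, refl_mass]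
  field_simp

lemma Dens.refl_W {f : ℝ → ℝ} (D : Dens f) (u : ℝ → ℝ) {x y : ℝ} (hx : 0 ≤ x) (hxy : x ≤ y)
    (hy : y ≤ 1) :
    WI (fun t => f (1 - t)) (fun t => u (1 - t)) x y = WI f u (1 - y) (1 - x) := by
  unfold WI
  rw [refl_mass]
  rcases hxy.eq_or_lt with h | h
  · subst h; simp [massI]
  · simp only [D.refl_cm hx h hy, sub_sub_cancel]

lemma refl_tl (u u' : ℝ → ℝ) (m t : ℝ) :
    tl (fun t => u (1 - t)) (fun t => - u' (1 - t)) m t = tl u u' (1 - m) (1 - t) := by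
  unfold tl; ring

lemma Setup.reflect {f u u' : ℝ → ℝ} {θL θH : ℝ} (S : Setup f u u' θL θH) :
    Setup (fun t => f (1 - t)) (fun t => u (1 - t)) (fun t => - u' (1 - t)) (1 - θH) (1 - θL) where
  dens := S.dens.reflect
  der := fun θ hθ => by
    have := S.der (1 - θ) ⟨by linarith [hθ.2], by linarith [hθ.1]⟩
    have h2 := this.comp θ ((hasDerivAt_id θ).const_sub 1)
    simpa [Function.comp_def] using h2
  cont := by
    apply ContinuousOn.neg
    apply S.cont.comp (by fun_prop)
    intro θ hθ
    exact ⟨by linarith [hθ.2], by linarith [hθ.1]⟩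
  h0 := by linarith [S.h2]
  h1 := by linarith [S.h1]
  h2 := by linarith [S.h0]
  a1 := fun x hx y hy h => by
    have := S.a3 (a := 1 - y) (b := 1 - x) ⟨by linarith [hy.2], by linarith [hy.1]⟩
      ⟨by linarith [hx.2], by linarith [hx.1]⟩ (by linarith)
    simpa using this
  a2 := fun x hx y hy h => by
    have := S.a2 (a := 1 - y) (b := 1 - x) ⟨by linarith [hy.2], by linarith [hy.1]⟩
      ⟨by linarith [hx.2], by linarith [hx.1]⟩ (by linarith)
    simpa using this
  a3 := fun x hx y hy h => by
    have := S.a1 (a := 1 - y) (b := 1 - x) ⟨by linarith [hy.2], by linarith [hy.1]⟩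
      ⟨by linarith [hx.2], by linarith [hx.1]⟩ (by linarith)
    simpa using this
  nopair := by
    rintro ⟨x, hx, y, hy, hxy, e1, e2⟩
    have h0 := S.h0
    have h2 := S.h2
    apply S.nopair
    refine ⟨1 - y, ⟨by linarith [hy.2], by linarith [hy.1]⟩, 1 - x,
      ⟨by linarith [hx.2], by linarith [hx.1]⟩, by linarith, ?_, ?_⟩
    · rw [refl_tl, S.dens.refl_cm (by linarith [hy.1]) (by linarith [hy.2]) le_rfl] at e2
      simpa using e2
    · rw [refl_tl, S.dens.refl_cm le_rfl (by linarith [hx.1]) (by linarith [hx.2])] at e1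
      simpa using e1

/-! ## Posterior mean maps -/

structure Good (f μ : ℝ → ℝ) (a b : ℝ) : Prop where
  maps : ∀ t ∈ Icc a b, μ t ∈ Icc a b
  mono : MonotoneOn μ (Icc a b)
  mart : ∀ g : ℝ → ℝ, MonotoneOn g (Icc a b) →
    ∫ t in a..b, g (μ t) * (t - μ t) * f t = 0

lemma Dens.iib {f : ℝ → ℝ} (D : Dens f) {a b : ℝ} (ha : 0 ≤ a) (hab : a ≤ b) (hb : b ≤ 1)
    {h : ℝ → ℝ} (hm : AEMeasurable h (volume.restrict (Icc a b))) {K : ℝ}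
    (hK : ∀ t ∈ Icc a b, |h t| ≤ K) :
    IntervalIntegrable (fun t => h t * f t) volume a b := by
  have h1 := D.ii ha hab hb
  rw [intervalIntegrable_iff_integrableOn_Icc_of_le hab] at h1 ⊢
  exact Integrable.bdd_mul (c := K) h1 hm.aestronglyMeasurable
    ((ae_restrict_iff' measurableSet_Icc).2 (Filter.Eventually.of_forall hK))

lemma Dens.ii_mono {f : ℝ → ℝ} (D : Dens f) {a b : ℝ} (ha : 0 ≤ a) (hab : a ≤ b) (hb : b ≤ 1)
    {h : ℝ → ℝ} (hm : MonotoneOn h (Icc a b)) {k : ℝ → ℝ}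
    (hk : AEMeasurable k (volume.restrict (Icc a b))) {K : ℝ}
    (hK : ∀ t ∈ Icc a b, |k t| ≤ K) :
    IntervalIntegrable (fun t => h t * k t * f t) volume a b := by
  apply D.iib ha hab hb (K := (|h a| + |h b|) * K)
  · exact (aemeasurable_restrict_of_monotoneOn measurableSet_Icc hm).mul hk
  · intro t ht
    rw [abs_mul]
    have h1 := hm (left_mem_Icc.2 hab) ht ht.1
    have h2 := hm ht (right_mem_Icc.2 hab) ht.2
    have h3 : |h t| ≤ |h a| + |h b| := by
      rw [abs_le]
      constructor
      · have := neg_abs_le (h a)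
        have := abs_nonneg (h b)
        linarith
      · have := le_abs_self (h b)
        have := abs_nonneg (h a)
        linarith
    have h4 := hK t ht
    have h5 := abs_nonneg (k t)
    have h6 := abs_nonneg (h t)
    nlinarith

lemma Dens.ii_cont_comp {f : ℝ → ℝ} (D : Dens f) {a b : ℝ} (ha : 0 ≤ a) (hab : a ≤ b)
    (hb : b ≤ 1) {μ u : ℝ → ℝ} (hm : MonotoneOn μ (Icc a b)) (hmap : ∀ t ∈ Icc a b, μ t ∈ Icc a b)
    (hu : ContinuousOn u (Icc a b)) :
    IntervalIntegrable (fun t => u (μ t) * f t) volume a b := by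
  obtain ⟨K, hK⟩ := isCompact_Icc.exists_bound_of_continuousOn hu
  apply D.iib ha hab hb (K := K)
  · have h1 : Continuous (IccExtend hab ((Icc a b).domRestrict u)) :=
      (continuousOn_iff_continuous_domRestrict.1 hu).Icc_extend'
    have h2 := h1.measurable.comp_aemeasurable
      (aemeasurable_restrict_of_monotoneOn (μ := volume) measurableSet_Icc hm)
    apply h2.congr
    apply (ae_restrict_iff' measurableSet_Icc).2 (Filter.Eventually.of_forall _)
    intro t ht
    simp [IccExtend_of_mem hab _ (hmap t ht), Set.domRestrict]
  · intro t ht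
    exact hK _ (hmap t ht)

lemma Good.ii_mart {f μ : ℝ → ℝ} {a b : ℝ} (D : Dens f) (ha : 0 ≤ a) (hab : a ≤ b)
    (hb : b ≤ 1) (G : Good f μ a b) {g : ℝ → ℝ} (hg : MonotoneOn g (Icc a b)) :
    IntervalIntegrable (fun t => g (μ t) * (t - μ t) * f t) volume a b := by
  apply D.ii_mono ha hab hb (K := b - a) (h := fun t => g (μ t)) (k := fun t => t - μ t)
  · intro x hx y hy h
    exact hg (G.maps x hx) (G.maps y hy) (G.mono hx hy h)
  · exact aemeasurable_id.sub (aemeasurable_restrict_of_monotoneOn measurableSet_Icc G.mono)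
  · intro t ht
    have := G.maps t ht
    rw [abs_le]
    constructor <;> linarith [ht.1, ht.2, this.1, this.2]

/-- The certificate lemma. -/
lemma Good.cert {f μ : ℝ → ℝ} {a b : ℝ} (D : Dens f) (ha : 0 ≤ a) (hab : a ≤ b)
    (hb : b ≤ 1) (G : Good f μ a b) {u p s : ℝ → ℝ} (hu : ContinuousOn u (Icc a b))
    (hp : ContinuousOn p (Icc a b)) (hs : MonotoneOn s (Icc a b))
    (hup : ∀ t ∈ Icc a b, u t ≤ p t)
    (hsub : ∀ t ∈ Icc a b, ∀ θ ∈ Icc a b, p t + s t * (θ - t) ≤ p θ) :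
    ∫ t in a..b, u (μ t) * f t ≤ ∫ t in a..b, p t * f t := by
  have i1 := D.ii_cont_comp ha hab hb G.mono G.maps hu
  have i2 := G.ii_mart D ha hab hb hs
  have i3 := D.iic ha hab hb hp
  have e : ∫ t in a..b, u (μ t) * f t =
      ∫ t in a..b, (u (μ t) * f t + s (μ t) * (t - μ t) * f t) := by
    rw [intervalIntegral.integral_add i1 i2, G.mart s hs, add_zero]
  rw [e]
  apply intervalIntegral.integral_mono_on hab (i1.add i2) i3
  intro t ht
  have hf := D.pos t ⟨ha.trans ht.1, ht.2.trans hb⟩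
  have h1 := hup _ (G.maps t ht)
  have h2 := hsub _ (G.maps t ht) t ht
  have : u (μ t) * f t + s (μ t) * (t - μ t) * f t = (u (μ t) + s (μ t) * (t - μ t)) * f t := by
    ring
  rw [this]
  apply mul_le_mul_of_nonneg_right _ hf.le
  linarith

lemma Good.cert_tl {f μ : ℝ → ℝ} {a b : ℝ} (D : Dens f) (ha : 0 ≤ a) (hab : a ≤ b)
    (hb : b ≤ 1) (G : Good f μ a b) {u u' : ℝ → ℝ} {m : ℝ} (hu : ContinuousOn u (Icc a b))
    (hup : ∀ t ∈ Icc a b, u t ≤ tl u u' m t) :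
    ∫ t in a..b, u (μ t) * f t ≤ massI f a b * tl u u' m (condMean f a b) := by
  rw [← D.int_tl ha hab hb]
  apply G.cert D ha hab hb (s := fun _ => u' m) hu _ _ hup
  · intro t ht θ hθ
    unfold tl
    apply le_of_eq; ring
  · unfold tl; fun_prop
  · exact monotoneOn_const

lemma Good.reflect {f μ : ℝ → ℝ} {a b : ℝ} (G : Good f μ a b) :
    Good (fun t => f (1 - t)) (fun t => 1 - μ (1 - t)) (1 - b) (1 - a) where
  maps := fun t ht => by
    have := G.maps (1 - t) ⟨by linarith [ht.2], by linarith [ht.1]⟩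
    exact ⟨by linarith [this.2], by linarith [this.1]⟩
  mono := fun x hx y hy h => by
    have := G.mono (show 1 - y ∈ Icc a b from ⟨by linarith [hy.2], by linarith [hy.1]⟩)
      (show 1 - x ∈ Icc a b from ⟨by linarith [hx.2], by linarith [hx.1]⟩) (by linarith)
    simp only
    linarith
  mart := fun g hg => by
    have h := G.mart (fun t => - g (1 - t)) (by
      intro x hx y hy h
      have := hg (a := 1 - y) (b := 1 - x) ⟨by linarith [hy.2], by linarith [hy.1]⟩
        ⟨by linarith [hx.2], by linarith [hx.1]⟩ (by linarith)
      simp only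
      linarith)
    have e := intervalIntegral.integral_comp_sub_left (a := 1 - b) (b := 1 - a)
      (fun t => - g (1 - μ t) * (t - μ t) * f t) 1
    simp only [sub_sub_cancel] at e
    rw [h] at e
    rw [← e]
    congr 1
    ext t
    ring

lemma Good.id_good (f : ℝ → ℝ) (a b : ℝ) : Good f (fun t => t) a b where
  maps := fun _ ht => ht
  mono := fun _ _ _ _ h => h
  mart := fun g _ => by simp

lemma Good.const_good {f : ℝ → ℝ} (D : Dens f) {a b : ℝ} (ha : 0 ≤ a) (hab : a < b)
    (hb : b ≤ 1) : Good f (fun _ => condMean f a b) a b where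
  maps := fun _ _ => Ioo_subset_Icc_self (D.cm_mem ha hab hb)
  mono := monotoneOn_const
  mart := fun g _ => by
    have h := D.int_aff ha hab.le hb (-(g (condMean f a b) * condMean f a b)) (g (condMean f a b))
    rw [← D.mass_mul ha hab.le hb] at h
    calc _ = ∫ t in a..b, (-(g (condMean f a b) * condMean f a b) + g (condMean f a b) * t) * f t := by
            congr 1; ext t; ring
      _ = 0 := by rw [h]; ring

lemma good_pool {f : ℝ → ℝ} (D : Dens f) (u : ℝ → ℝ) {a b : ℝ} (ha : 0 ≤ a) (hab : a ≤ b)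
    (hb : b ≤ 1) : ∃ μ, Good f μ a b ∧ ∫ t in a..b, u (μ t) * f t = WI f u a b := by
  rcases hab.eq_or_lt with h | h
  · subst h
    exact ⟨_, Good.id_good f a a, by simp [WI, massI]⟩
  · refine ⟨_, Good.const_good D ha h hb, ?_⟩
    simp only [WI, massI, intervalIntegral.integral_const_mul]
    ring

lemma ite_int_left {φ ψ : ℝ → ℝ} {a c : ℝ} (hac : a ≤ c) :
    ∫ t in a..c, (if t ≤ c then φ t else ψ t) = ∫ t in a..c, φ t := by
  apply intervalIntegral.integral_congr_ae
  apply Filter.Eventually.of_forall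
  intro t ht
  rw [uIoc_of_le hac] at ht
  rw [if_pos ht.2]

lemma ite_int_right {φ ψ : ℝ → ℝ} {c b : ℝ} (hcb : c ≤ b) :
    ∫ t in c..b, (if t ≤ c then φ t else ψ t) = ∫ t in c..b, ψ t := by
  apply intervalIntegral.integral_congr_ae
  apply Filter.Eventually.of_forall
  intro t ht
  rw [uIoc_of_le hcb] at ht
  rw [if_neg (not_le.2 ht.1)]

lemma ite_int {φ ψ : ℝ → ℝ} {a c b : ℝ} (hac : a ≤ c) (hcb : c ≤ b)
    (h1 : IntervalIntegrable φ volume a c) (h2 : IntervalIntegrable ψ volume c b) :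
    ∫ t in a..b, (if t ≤ c then φ t else ψ t) = (∫ t in a..c, φ t) + ∫ t in c..b, ψ t := by
  rw [← ite_int_left (ψ := ψ) hac, ← ite_int_right (φ := φ) hcb]
  symm
  apply intervalIntegral.integral_add_adjacent_intervals
  · apply h1.congr
    intro t ht
    rw [uIoc_of_le hac] at ht
    simp only [if_pos ht.2]
  · apply h2.congr
    intro t ht
    rw [uIoc_of_le hcb] at ht
    simp only [if_neg (not_le.2 ht.1)]

lemma Good.glue {f μ ν : ℝ → ℝ} {a b c : ℝ} (D : Dens f) (ha : 0 ≤ a) (hac : a ≤ c) (hcb : c ≤ b)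
    (hb : b ≤ 1) (G : Good f μ a c) (H : Good f ν c b) :
    Good f (fun t => if t ≤ c then μ t else ν t) a b where
  maps := fun t ht => by
    by_cases h : t ≤ c
    · simp only [h, if_true]
      have := G.maps t ⟨ht.1, h⟩
      exact ⟨this.1, this.2.trans hcb⟩
    · simp only [h, if_false]
      have := H.maps t ⟨(not_le.1 h).le, ht.2⟩
      exact ⟨hac.trans this.1, this.2⟩
  mono := fun x hx y hy h => by
    by_cases h1 : x ≤ c <;> by_cases h2 : y ≤ c
    · simp only [h1, h2, if_true]
      exact G.mono ⟨hx.1, h1⟩ ⟨hy.1, h2⟩ h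
    · simp only [h1, h2, if_true, if_false]
      exact (G.maps x ⟨hx.1, h1⟩).2.trans (H.maps y ⟨(not_le.1 h2).le, hy.2⟩).1
    · exact absurd (h.trans h2) h1
    · simp only [h1, h2, if_false]
      exact H.mono ⟨(not_le.1 h1).le, hx.2⟩ ⟨(not_le.1 h2).le, hy.2⟩ h
  mart := fun g hg => by
    have g1 := hg.mono (Icc_subset_Icc_right hcb)
    have g2 := hg.mono (Icc_subset_Icc_left hac)
    have := ite_int hac hcb (G.ii_mart D ha hac (hcb.trans hb) g1)
      (H.ii_mart D (ha.trans hac) hcb hb g2)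
    rw [G.mart g g1, H.mart g g2, add_zero] at this
    rw [← this]
    congr 1
    ext t
    split_ifs <;> rfl

lemma Good.glue_int {f μ ν : ℝ → ℝ} {a b c : ℝ} (D : Dens f) (ha : 0 ≤ a) (hac : a ≤ c)
    (hcb : c ≤ b) (hb : b ≤ 1) (G : Good f μ a c) (H : Good f ν c b) {u : ℝ → ℝ}
    (hu : ContinuousOn u (Icc 0 1)) :
    ∫ t in a..b, u (if t ≤ c then μ t else ν t) * f t =
      (∫ t in a..c, u (μ t) * f t) + ∫ t in c..b, u (ν t) * f t := by
  rw [← ite_int hac hcb (D.ii_cont_comp ha hac (hcb.trans hb) G.mono G.maps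
      (hu.mono (Icc_subset_Icc ha (hcb.trans hb))))
    (D.ii_cont_comp (ha.trans hac) hcb hb H.mono H.maps
      (hu.mono (Icc_subset_Icc (ha.trans hac) hb)))]
  congr 1
  ext t
  split_ifs <;> rfl

/-! ## One-sided problems -/

lemma Setup.ucont {f u u' : ℝ → ℝ} {θL θH : ℝ} (S : Setup f u u' θL θH) :
    ContinuousOn u (Icc 0 1) := fun t ht => (S.der t ht).continuousAt.continuousWithinAt

lemma Setup.d1 {f u u' : ℝ → ℝ} {θL θH : ℝ} (S : Setup f u u' θL θH) :
    ∀ θ ∈ Icc 0 θL, HasDerivAt u (u' θ) θ := fun t ht =>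
  S.der t ⟨ht.1, ht.2.trans (S.h1.le.trans S.h2.le)⟩

lemma Setup.d2 {f u u' : ℝ → ℝ} {θL θH : ℝ} (S : Setup f u u' θL θH) :
    ∀ θ ∈ Icc θL θH, HasDerivAt u (u' θ) θ := fun t ht =>
  S.der t ⟨S.h0.le.trans ht.1, ht.2.trans S.h2.le⟩

lemma Setup.d3 {f u u' : ℝ → ℝ} {θL θH : ℝ} (S : Setup f u u' θL θH) :
    ∀ θ ∈ Icc θH 1, HasDerivAt u (u' θ) θ := fun t ht =>
  S.der t ⟨S.h0.le.trans (S.h1.le.trans ht.1), ht.2⟩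

lemma Setup.cert_left {f u u' : ℝ → ℝ} {θL θH : ℝ} (S : Setup f u u' θL θH) {x m : ℝ}
    (hx : x ∈ Icc θL θH) (hm : m ∈ Ico 0 x) (h : u x ≤ tl u u' m x) :
    m ≤ θL ∧ ∀ t ∈ Icc 0 x, u t ≤ tl u u' m t := by
  have hmL : m ≤ θL := by
    by_contra hc
    push Not at hc
    have := tl_lt S.d2 S.a2 (m := m) (t := x) ⟨hc.le, hm.2.le.trans hx.2⟩ hx hm.2.ne'
    linarith
  refine ⟨hmL, ?_⟩
  intro t ht
  rcases le_total t θL with h1 | h1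
  · exact tl_ge S.d1 S.a1 ⟨hm.1, hmL⟩ ⟨ht.1, h1⟩
  · have e1 := tl_ge S.d1 S.a1 (m := m) (t := θL) ⟨hm.1, hmL⟩ ⟨S.h0.le, le_rfl⟩
    rcases hx.1.eq_or_lt with h2 | h2
    · have : t = θL := le_antisymm (ht.2.trans h2.ge) h1
      rw [this]; exact e1
    · have e2 := conv3 S.d2 S.a2 le_rfl h1 ht.2 hx.2
      have : u t * (x - θL) ≤ tl u u' m t * (x - θL) := by
        have e3 : tl u u' m t * (x - θL) =
          tl u u' m θL * (x - t) + tl u u' m x * (t - θL) := by unfold tl; ring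
        rw [e3]
        have := mul_le_mul_of_nonneg_right e1 (sub_nonneg.2 ht.2)
        have := mul_le_mul_of_nonneg_right h (sub_nonneg.2 h1)
        linarith
      exact le_of_mul_le_mul_right this (by linarith)

lemma Setup.left {f u u' : ℝ → ℝ} {θL θH : ℝ} (S : Setup f u u' θL θH) {μ : ℝ → ℝ} {c : ℝ}
    (hc : c ∈ Icc θL θH) (G : Good f μ 0 c) :
    (∫ t in (0:ℝ)..c, u (μ t) * f t ≤ WI f u 0 c) ∨
    ∃ x ∈ Ioo θL c, tl u u' (condMean f 0 x) x = u x ∧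
      ∫ t in (0:ℝ)..c, u (μ t) * f t ≤ WI f u 0 x + ∫ t in x..c, u t * f t := by
  have D := S.dens
  have c0 : 0 < c := S.h0.trans_le hc.1
  have c1 : c ≤ 1 := hc.2.trans S.h2.le
  have huc : ContinuousOn u (Icc 0 c) := S.ucont.mono (Icc_subset_Icc_right c1)
  have key : ∀ x ∈ Icc θL θH, u x ≤ tl u u' (condMean f 0 x) x → condMean f 0 x ≤ θL ∧
      ∀ t ∈ Icc 0 x, u t ≤ tl u u' (condMean f 0 x) t := by
    intro x hx h
    have := D.cm_mem le_rfl (S.h0.trans_le hx.1) (hx.2.trans S.h2.le)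
    exact S.cert_left hx ⟨this.1.le, this.2⟩ h
  by_cases hA : u c ≤ tl u u' (condMean f 0 c) c
  · left
    have := G.cert_tl D le_rfl c0.le c1 huc (key c hc hA).2
    apply this.trans
    simp [WI, tl]
  · right
    push Not at hA
    have hL := tl_gt S.d1 S.a1 (m := condMean f 0 θL) (t := θL)
      (Ioo_subset_Icc_self (D.cm_mem le_rfl S.h0 (S.h1.le.trans S.h2.le)))
      ⟨S.h0.le, le_rfl⟩ (D.cm_mem le_rfl S.h0 (S.h1.le.trans S.h2.le)).2.ne'
    have hmaps : ∀ x ∈ Icc θL c, condMean f 0 x ∈ Icc (0:ℝ) 1 := by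
      intro x hx
      have := D.cm_mem le_rfl (S.h0.trans_le hx.1) (hx.2.trans c1)
      exact ⟨this.1.le, this.2.le.trans (hx.2.trans c1)⟩
    have hcm : ContinuousOn (fun x => condMean f 0 x) (Icc θL c) :=
      D.cm_cont_left.mono (fun x hx => ⟨S.h0.trans_le hx.1, hx.2.trans c1⟩)
    have hφ : ContinuousOn (fun x => tl u u' (condMean f 0 x) x - u x) (Icc θL c) := by
      unfold tl
      apply ContinuousOn.sub
      · apply ContinuousOn.add (S.ucont.comp hcm hmaps)
        exact (S.cont.comp hcm hmaps).mul (continuousOn_id.sub hcm)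
      · exact S.ucont.mono (Icc_subset_Icc S.h0.le c1)
    obtain ⟨x, hx, hx0⟩ := intermediate_value_Icc' hc.1 hφ
      (show (0:ℝ) ∈ Icc _ _ from ⟨by linarith, by linarith⟩)
    simp only at hx0
    have hxL : θL < x := by
      rcases hx.1.eq_or_lt with h | h
      · subst h; linarith
      · exact h
    have hxc : x < c := by
      rcases hx.2.eq_or_lt with h | h
      · subst h; linarith
      · exact h
    have hxx : x ∈ Icc θL θH := ⟨hx.1, hx.2.trans hc.2⟩
    have x0 : 0 < x := S.h0.trans hxL
    have x1 : x ≤ 1 := hxc.le.trans c1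
    refine ⟨x, ⟨hxL, hxc⟩, by linarith, ?_⟩
    obtain ⟨hmL, hT⟩ := key x hxx (by linarith)
    set m := condMean f 0 x with hm
    have hm0 : 0 < m := (D.cm_mem le_rfl x0 x1).1
    have hTx : tl u u' m x = u x := by linarith
    -- slope comparison
    have hslope : u' m ≤ u' x := by
      obtain ⟨ξ, hξ, e⟩ := mvt_aux S.d2 le_rfl hxL hxx.2
      have h1 := S.a2 ⟨hξ.1.le, hξ.2.le.trans hxx.2⟩ hxx hξ.2
      have h2 := hT θL ⟨S.h0.le, hxL.le⟩
      have h3 : u' m * (x - θL) ≤ u' ξ * (x - θL) := by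
        rw [← e, ← hTx]
        unfold tl at *
        linarith
      have h4 := le_of_mul_le_mul_right h3 (by linarith)
      linarith
    have sub2 : ∀ t ∈ Icc x c, t ∈ Icc θL θH := fun t ht => ⟨hxL.le.trans ht.1, ht.2.trans hc.2⟩
    have hmon : ∀ t ∈ Icc x c, u' x ≤ u' t := fun t ht =>
      S.a2.monotoneOn hxx (sub2 t ht) ht.1
    have hTu : ∀ t ∈ Icc x c, tl u u' m t ≤ u t := by
      intro t ht
      have := tl_le S.d2 S.a2 hxx (sub2 t ht)
      unfold tl at this hTx ⊢
      have : 0 ≤ (u' x - u' m) * (t - x) := mul_nonneg (by linarith) (by linarith [ht.1])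
      linarith
    have hres := G.cert D le_rfl c0.le c1 (u := u)
      (p := fun t => if t ≤ x then tl u u' m t else u t)
      (s := fun t => if t ≤ x then u' m else u' t) huc ?_ ?_ ?_ ?_
    · apply hres.trans
      have e : ∀ t, (if t ≤ x then tl u u' m t else u t) * f t =
          if t ≤ x then tl u u' m t * f t else u t * f t := by
        intro t; split_ifs <;> rfl
      simp_rw [e]
      rw [ite_int x0.le hxc.le (D.iic le_rfl x0.le x1 (by unfold tl; fun_prop))
        (D.iic x0.le hxc.le c1 (huc.mono (Icc_subset_Icc_left x0.le))),
        D.int_tl le_rfl x0.le x1, ← hm]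
      simp [WI, tl, hm]
    · -- continuity
      have : Continuous (tl u u' m) := by unfold tl; fun_prop
      apply ContinuousOn.if
      · intro t ht
        have : t ∈ frontier (Iic x) := ht.2
        rw [frontier_Iic] at this
        rw [mem_singleton_iff.1 this, hTx]
      · exact this.continuousOn
      · exact huc.mono inter_subset_left
    · intro y hy z hz h
      simp only
      by_cases h1 : y ≤ x <;> by_cases h2 : z ≤ x
      · simp [h1, h2]
      · simp only [h1, h2, if_true, if_false]
        exact hslope.trans (hmon z ⟨(not_le.1 h2).le, hz.2⟩)
      · exact absurd (h.trans h2) h1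
      · simp only [h1, h2, if_false]
        exact S.a2.monotoneOn (sub2 y ⟨(not_le.1 h1).le, hy.2⟩)
          (sub2 z ⟨(not_le.1 h2).le, hz.2⟩) h
    · intro t ht
      split_ifs with h
      · exact hT t ⟨ht.1, h⟩
      · exact le_rfl
    · intro t ht θ hθ
      by_cases h1 : t ≤ x <;> by_cases h2 : θ ≤ x
      · simp only [h1, h2, if_true]; unfold tl; linarith
      · simp only [h1, h2, if_true, if_false]
        have := hTu θ ⟨(not_le.1 h2).le, hθ.2⟩
        unfold tl at *; linarith
      · simp only [h1, h2, if_true, if_false]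
        have tt : t ∈ Icc x c := ⟨(not_le.1 h1).le, ht.2⟩
        have e1 := tl_le S.d2 S.a2 (sub2 t tt) hxx
        have e2 := hmon t tt
        have : 0 ≤ (u' t - u' m) * (x - θ) := mul_nonneg (by linarith) (by linarith)
        have e3 : tl u u' m θ = u x + u' m * (θ - x) := by
          rw [← hTx]; unfold tl; ring
        rw [e3]
        unfold tl at e1
        linarith
      · simp only [h1, h2, if_false]
        exact tl_le S.d2 S.a2 (sub2 t ⟨(not_le.1 h1).le, ht.2⟩) (sub2 θ ⟨(not_le.1 h2).le, hθ.2⟩)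

lemma Setup.right {f u u' : ℝ → ℝ} {θL θH : ℝ} (S : Setup f u u' θL θH) {μ : ℝ → ℝ} {c : ℝ}
    (hc : c ∈ Icc θL θH) (G : Good f μ c 1) :
    (∫ t in c..1, u (μ t) * f t ≤ WI f u c 1) ∨
    ∃ y ∈ Ioo c θH, tl u u' (condMean f y 1) y = u y ∧
      ∫ t in c..1, u (μ t) * f t ≤ (∫ t in c..y, u t * f t) + WI f u y 1 := by
  have G' := G.reflect
  rw [sub_self] at G'
  have h0 := S.h0
  have h2 := S.h2
  have c1 : c ≤ 1 := hc.2.trans S.h2.le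
  have c0 : 0 < c := S.h0.trans_le hc.1
  have e := intervalIntegral.integral_comp_sub_left (a := 0) (b := 1 - c)
      (fun t => u (μ t) * f t) 1
  simp only [sub_sub_cancel, sub_zero] at e
  have := S.reflect.left (c := 1 - c) ⟨by linarith [hc.2], by linarith [hc.1]⟩ G'
  simp only [sub_sub_cancel] at this
  rw [e, S.dens.refl_W u le_rfl (by linarith) (by linarith)] at this
  simp only [sub_sub_cancel, sub_zero] at this
  rcases this with h | ⟨x, hx, e1, e2⟩
  · exact Or.inl h
  · right
    have x0 : 0 < x := by linarith [hx.1]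
    have x1 : x < 1 := by linarith [hx.2]
    refine ⟨1 - x, ⟨by linarith [hx.2], by linarith [hx.1]⟩, ?_, ?_⟩
    · rw [refl_tl, S.dens.refl_cm le_rfl x0 x1.le] at e1
      simpa using e1
    · rw [S.dens.refl_W u le_rfl x0.le x1.le] at e2
      have e' := intervalIntegral.integral_comp_sub_left (a := x) (b := 1 - c)
        (fun t => u t * f t) 1
      simp only [sub_sub_cancel] at e'
      rw [e'] at e2
      simp only [sub_zero] at e2
      linarith

/-- two-pool value -/
def vI (f u : ℝ → ℝ) (z : ℝ) : ℝ := WI f u 0 z + WI f u z 1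

/-- Case in which some point of the convex region is not pooled. -/
lemma Setup.split {f u u' : ℝ → ℝ} {θL θH : ℝ} (S : Setup f u u' θL θH) {μ ν : ℝ → ℝ} {c : ℝ}
    (hc : c ∈ Icc θL θH) (G : Good f μ 0 c) (H : Good f ν c 1) :
    ∃ z ∈ Icc (0:ℝ) 1, (∫ t in (0:ℝ)..c, u (μ t) * f t) + (∫ t in c..1, u (ν t) * f t)
      ≤ vI f u z := by
  have D := S.dens
  have h0 := S.h0
  have h1 := S.h1
  have h2 := S.h2
  have c1 : c ≤ 1 := hc.2.trans S.h2.le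
  have c0 : 0 < c := S.h0.trans_le hc.1
  rcases S.left hc G with hl | ⟨x, hx, ex, hl⟩
  · rcases S.right hc H with hr | ⟨y, hy, ey, hr⟩
    · exact ⟨c, ⟨c0.le, c1⟩, by unfold vI; linarith⟩
    · obtain ⟨κ, K, eK⟩ := good_pool D u le_rfl c0.le c1
      have y1 : y ≤ 1 := by linarith [hy.2]
      have y0 : 0 ≤ y := by linarith [hy.1]
      have GG := K.glue D le_rfl c0.le hy.1.le y1 (Good.id_good f c y)
      have GI := K.glue_int D le_rfl c0.le hy.1.le y1 (Good.id_good f c y) S.ucont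
      have hyy : y ∈ Icc θL θH := ⟨by linarith [hy.1, hc.1], hy.2.le⟩
      rcases S.left hyy GG with hl' | ⟨x, hx, ex, hl'⟩
      · refine ⟨y, ⟨y0, y1⟩, ?_⟩
        unfold vI
        linarith
      · exact absurd ⟨x, ⟨hx.1, by linarith [hx.2, hy.2]⟩, y, ⟨by linarith [hx.1, hx.2], hy.2⟩,
          hx.2, ex, ey⟩ S.nopair
  · have x0 : 0 ≤ x := by linarith [hx.1]
    have x1 : x ≤ 1 := by linarith [hx.2]
    have GG := (Good.id_good f x c).glue D x0 hx.2.le c1 le_rfl H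
    have GI := (Good.id_good f x c).glue_int D x0 hx.2.le c1 le_rfl H S.ucont
    have hxx : x ∈ Icc θL θH := ⟨hx.1.le, by linarith [hx.2, hc.2]⟩
    rcases S.right hxx GG with hr' | ⟨y, hy, ey, hr'⟩
    · refine ⟨x, ⟨x0, x1⟩, ?_⟩
      unfold vI
      linarith
    · exact absurd ⟨x, ⟨hx.1, by linarith [hy.1, hy.2]⟩, y, ⟨by linarith [hx.1, hy.1], hy.2⟩,
          hy.1, ex, ey⟩ S.nopair

/-! ## Three pools -/

lemma Dens.mom_le {f : ℝ → ℝ} (D : Dens f) {x y : ℝ} (hx : 0 ≤ x) (hxy : x ≤ y) (hy : y ≤ 1) :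
    momI f x y ≤ y * massI f x y ∧ x * massI f x y ≤ momI f x y := by
  rcases hxy.eq_or_lt with h | h
  · subst h; simp [massI, momI]
  · rw [← D.mass_mul hx hxy hy]
    have h1 := D.cm_mem hx h hy
    have h2 := D.mass_pos hx h hy
    constructor <;> nlinarith [h1.1, h1.2]

lemma Dens.tl_add {f : ℝ → ℝ} (D : Dens f) (u u' : ℝ → ℝ) (m : ℝ) {x y z : ℝ} (hx : 0 ≤ x)
    (hxy : x ≤ y) (hyz : y ≤ z) (hz : z ≤ 1) :
    massI f x y * tl u u' m (condMean f x y) + massI f y z * tl u u' m (condMean f y z) =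
      massI f x z * tl u u' m (condMean f x z) := by
  have e1 := D.mass_mul hx hxy (hyz.trans hz)
  have e2 := D.mass_mul (hx.trans hxy) hyz hz
  have e3 := D.mass_mul hx (hxy.trans hyz) hz
  have e4 := D.mass_add hx hxy hyz hz
  have e5 := D.mom_add hx hxy hyz hz
  unfold tl
  linear_combination (u' m) * (e1 + e2 - e3 + e5) + (u m - u' m * m) * e4

lemma Dens.W_le {f : ℝ → ℝ} (D : Dens f) {u u' : ℝ → ℝ} {m : ℝ} {x y : ℝ} (hx : 0 ≤ x)
    (hxy : x ≤ y) (hy : y ≤ 1)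
    (h : x < y → u (condMean f x y) ≤ tl u u' m (condMean f x y)) :
    WI f u x y ≤ massI f x y * tl u u' m (condMean f x y) := by
  rcases hxy.eq_or_lt with h1 | h1
  · subst h1; simp [massI, WI]
  · exact mul_le_mul_of_nonneg_left (h h1) (D.mass_nonneg hx hxy hy)

lemma Dens.W_ge {f : ℝ → ℝ} (D : Dens f) {u u' : ℝ → ℝ} {m : ℝ} {x y : ℝ} (hx : 0 ≤ x)
    (hxy : x ≤ y) (hy : y ≤ 1)
    (h : x < y → tl u u' m (condMean f x y) ≤ u (condMean f x y)) :
    massI f x y * tl u u' m (condMean f x y) ≤ WI f u x y := by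
  rcases hxy.eq_or_lt with h1 | h1
  · subst h1; simp [massI, WI]
  · exact mul_le_mul_of_nonneg_left (h h1) (D.mass_nonneg hx hxy hy)

lemma Dens.merge {f : ℝ → ℝ} (D : Dens f) {u u' : ℝ → ℝ} {x y z : ℝ} (hx : 0 ≤ x)
    (hxy : x ≤ y) (hyz : y ≤ z) (hz : z ≤ 1) {α β : ℝ}
    (hd : ∀ θ ∈ Icc α β, HasDerivAt u (u' θ) θ) (ha : StrictAntiOn u' (Icc α β))
    (h1 : x < y → condMean f x y ∈ Icc α β) (h2 : y < z → condMean f y z ∈ Icc α β) :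
    WI f u x y + WI f u y z ≤ WI f u x z := by
  rcases (hxy.trans hyz).eq_or_lt with h | h
  · have e1 : x = y := le_antisymm hxy (by linarith)
    have e2 : y = z := le_antisymm hyz (by linarith)
    subst e1; subst e2; simp [WI, massI]
  · have hxz : condMean f x z ∈ Icc α β := by
      rcases hxy.eq_or_lt with h3 | h3
      · subst h3; exact h2 h
      rcases hyz.eq_or_lt with h4 | h4
      · subst h4; exact h1 h
      have m1 := h1 h3
      have m2 := h2 h4
      have e1 := D.mass_mul hx hxy (hyz.trans hz)
      have e2 := D.mass_mul (hx.trans hxy) hyz hz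
      have e3 := D.mass_mul hx (hxy.trans hyz) hz
      have e4 := D.mass_add hx hxy hyz hz
      have e5 := D.mom_add hx hxy hyz hz
      have p1 := D.mass_pos hx h3 (hyz.trans hz)
      have p2 := D.mass_pos (hx.trans hxy) h4 hz
      have p3 := D.mass_pos hx h hz
      constructor
      · apply le_of_mul_le_mul_left _ p3
        have k1 := mul_le_mul_of_nonneg_left m1.1 p1.le
        have k2 := mul_le_mul_of_nonneg_left m2.1 p2.le
        rw [e3, ← e5, ← e4, add_mul]
        linarith
      · apply le_of_mul_le_mul_left _ p3
        have k1 := mul_le_mul_of_nonneg_left m1.2 p1.le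
        have k2 := mul_le_mul_of_nonneg_left m2.2 p2.le
        rw [e3, ← e5, ← e4, add_mul]
        linarith
    have t1 := D.W_le (u := u) (u' := u') (m := condMean f x z) hx hxy (hyz.trans hz)
      (fun h => tl_ge hd ha hxz (h1 h))
    have t2 := D.W_le (u := u) (u' := u') (m := condMean f x z) (hx.trans hxy) hyz hz
      (fun h => tl_ge hd ha hxz (h2 h))
    have t3 := D.tl_add u u' (condMean f x z) hx hxy hyz hz
    have t4 : massI f x z * tl u u' (condMean f x z) (condMean f x z) = WI f u x z := by
      simp [tl, WI]
    linarith

section three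
variable {f u u' : ℝ → ℝ} {θL θH : ℝ}

lemma Setup.three_a (S : Setup f u u' θL θH) {a b : ℝ} (ha : 0 ≤ a)
    (haL : a ≤ θL) (hbH : θH ≤ b) (hb : b ≤ 1) (hm : condMean f a b ∈ Icc θL θH)
    (hw : tl u u' (condMean f a b) a ≤ u a) :
    ∃ z ∈ Icc (0:ℝ) 1, WI f u 0 a + WI f u a b + WI f u b 1 ≤ vI f u z := by
  have D := S.dens
  have h0 := S.h0
  have h1 := S.h1
  have h2 := S.h2
  have hLb : θL < b := by linarith
  -- the tangent line is below `u` on `[a, θH]`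
  have hT : ∀ t ∈ Icc a θH, tl u u' (condMean f a b) t ≤ u t := by
    intro t ht
    rcases le_total θL t with h | h
    · exact tl_le S.d2 S.a2 hm ⟨h, ht.2⟩
    · have eL := tl_le S.d2 S.a2 (t := θL) hm ⟨le_rfl, h1.le⟩
      rcases haL.eq_or_lt with h3 | h3
      · have : t = a := by linarith [ht.1]
        rw [this]; exact hw
      have c := conc3 S.d1 S.a1 ha ht.1 h le_rfl
      have e3 : tl u u' (condMean f a b) t * (θL - a) =
          tl u u' (condMean f a b) a * (θL - t) + tl u u' (condMean f a b) θL * (t - a) := by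
        unfold tl; ring
      have := mul_le_mul_of_nonneg_right hw (sub_nonneg.2 h)
      have := mul_le_mul_of_nonneg_right eL (sub_nonneg.2 ht.1)
      apply le_of_mul_le_mul_right _ (sub_pos.2 h3)
      linarith
  have hsplit : ∀ c ∈ Icc a θL, condMean f c b ≤ θH →
      WI f u a b ≤ WI f u a c + WI f u c b := by
    intro c hc hcb
    have hc1 : c < b := by linarith [hc.2]
    have t1 := D.W_ge (u := u) (u' := u') (m := condMean f a b) ha hc.1 (by linarith)
      (fun h => hT _ (by
        have := D.cm_mem ha h (by linarith)
        exact ⟨this.1.le, by linarith [this.2, hc.2]⟩))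
    have t2 := D.W_ge (u := u) (u' := u') (m := condMean f a b) (ha.trans hc.1) hc1.le hb
      (fun h => hT _ (by
        have := D.cm_mem (ha.trans hc.1) h hb
        exact ⟨by linarith [this.1, hc.1], hcb⟩))
    have t3 := D.tl_add u u' (condMean f a b) ha hc.1 hc1.le hb
    have t4 : massI f a b * tl u u' (condMean f a b) (condMean f a b) = WI f u a b := by
      simp [tl, WI]
    linarith
  have hmerge : ∀ c ∈ Icc a θL, WI f u 0 a + WI f u a c ≤ WI f u 0 c := by
    intro c hc
    apply D.merge le_rfl ha hc.1 (by linarith [hc.2]) S.d1 S.a1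
    · intro h
      have := D.cm_mem le_rfl h (by linarith)
      exact ⟨this.1.le, by linarith [this.2]⟩
    · intro h
      have := D.cm_mem ha h (by linarith [hc.2])
      exact ⟨by linarith [this.1], by linarith [this.2, hc.2]⟩
  by_cases hcase : condMean f θL b ≤ θH
  · have s1 := hsplit θL ⟨haL, le_rfl⟩ hcase
    have s2 := hmerge θL ⟨haL, le_rfl⟩
    obtain ⟨μ0, G0, e0⟩ := good_pool D u le_rfl h0.le (by linarith : θL ≤ 1)
    obtain ⟨μ1, G1, e1⟩ := good_pool D u h0.le hLb.le hb
    obtain ⟨μ2, G2, e2⟩ := good_pool D u (h0.le.trans hLb.le) hb le_rfl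
    have G := G1.glue D h0.le hLb.le hb le_rfl G2
    have I := G1.glue_int D h0.le hLb.le hb le_rfl G2 S.ucont
    obtain ⟨z, hz, hv⟩ := S.split ⟨le_rfl, h1.le⟩ G0 G
    exact ⟨z, hz, by linarith⟩
  · push Not at hcase
    have hcont : ContinuousOn (fun c => condMean f c b) (Icc a θL) :=
      (D.cm_cont_lower hb).mono (fun c hc => ⟨ha.trans hc.1, by linarith [hc.2]⟩)
    obtain ⟨c, hc, ec⟩ := intermediate_value_Icc haL hcont
      (show θH ∈ Icc _ _ from ⟨hm.2, hcase.le⟩)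
    simp only at ec
    have s1 := hsplit c hc ec.le
    have s2 := hmerge c hc
    have hcb : c ≤ b := by linarith [hc.2]
    have s3 : WI f u c b + WI f u b 1 ≤ WI f u c 1 := by
      apply D.merge (ha.trans hc.1) hcb hb le_rfl S.d3 S.a3
      · intro h
        rw [ec]; exact ⟨le_rfl, h2.le⟩
      · intro h
        have := D.cm_mem (by linarith) h le_rfl
        exact ⟨by linarith [this.1], this.2.le⟩
    refine ⟨c, ⟨ha.trans hc.1, hcb.trans hb⟩, ?_⟩
    unfold vI
    linarith

lemma Setup.three_b (S : Setup f u u' θL θH) {a b : ℝ} (ha : 0 ≤ a)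
    (haL : a ≤ θL) (hbH : θH ≤ b) (hb : b ≤ 1) (hm : condMean f a b ∈ Icc θL θH)
    (hw : tl u u' (condMean f a b) b ≤ u b) :
    ∃ z ∈ Icc (0:ℝ) 1, WI f u 0 a + WI f u a b + WI f u b 1 ≤ vI f u z := by
  have D := S.dens
  have h1 := S.h1
  have e := D.refl_cm (x := 1 - b) (y := 1 - a) (by linarith) (by linarith) (by linarith)
  simp only [sub_sub_cancel] at e
  have := S.reflect.three_a (a := 1 - b) (b := 1 - a) (by linarith) (by linarith) (by linarith)
    (by linarith) (by rw [e]; exact ⟨by linarith [hm.2], by linarith [hm.1]⟩)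
    (by rw [refl_tl, e]; simpa using hw)
  obtain ⟨z, hz, hv⟩ := this
  refine ⟨1 - z, ⟨by linarith [hz.2], by linarith [hz.1]⟩, ?_⟩
  unfold vI at *
  rw [D.refl_W u le_rfl (by linarith) (by linarith),
    D.refl_W u (by linarith) (by linarith) (by linarith),
    D.refl_W u (by linarith) (by linarith) (by linarith),
    D.refl_W u le_rfl hz.1 hz.2, D.refl_W u hz.1 hz.2 le_rfl] at hv
  simp only [sub_sub_cancel, sub_zero, sub_self] at hv
  linarith

set_option maxHeartbeats 1000000 in
lemma Setup.three_c (S : Setup f u u' θL θH) {a b : ℝ} (ha : 0 ≤ a)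
    (haL : a ≤ θL) (hbH : θH ≤ b) (hb : b ≤ 1) (hm : condMean f a b ∈ Icc θL θH)
    (hwa : u a < tl u u' (condMean f a b) a) (hwb : u b < tl u u' (condMean f a b) b)
    (hM : condMean f 0 1 ≤ θH) :
    WI f u 0 a + WI f u a b + WI f u b 1 ≤ WI f u 0 1 := by
  have D := S.dens
  have h0 := S.h0
  have h1 := S.h1
  have h2 := S.h2
  have hab : a < b := by linarith
  set m := condMean f a b with hmdef
  have eL : tl u u' m θL ≤ u θL := tl_le S.d2 S.a2 hm ⟨le_rfl, h1.le⟩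
  have eH : tl u u' m θH ≤ u θH := tl_le S.d2 S.a2 hm ⟨h1.le, le_rfl⟩
  have haL' : a < θL := by
    rcases haL.eq_or_lt with h | h
    · subst h; linarith
    · exact h
  have hbH' : θH < b := by
    rcases hbH.eq_or_lt with h | h
    · subst h; linarith
    · exact h
  -- below `a`, `u` is below the tangent line
  have hlow : ∀ t ∈ Icc 0 a, u t ≤ tl u u' m t := by
    intro t ht
    have c := conc3 S.d1 S.a1 ht.1 ht.2 haL le_rfl
    have e3 : tl u u' m a * (θL - t) =
          tl u u' m t * (θL - a) + tl u u' m θL * (a - t) := by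
      unfold tl; ring
    have := mul_le_mul_of_nonneg_right hwa.le (sub_nonneg.2 (ht.2.trans haL))
    have := mul_le_mul_of_nonneg_right eL (sub_nonneg.2 ht.2)
    apply le_of_mul_le_mul_right _ (sub_pos.2 haL')
    linarith
  have hhigh : ∀ t ∈ Icc b 1, u t ≤ tl u u' m t := by
    intro t ht
    have c := conc3 S.d3 S.a3 le_rfl hbH ht.1 ht.2
    have e3 : tl u u' m b * (t - θH) =
          tl u u' m θH * (t - b) + tl u u' m t * (b - θH) := by
      unfold tl; ring
    have := mul_le_mul_of_nonneg_right hwb.le (sub_nonneg.2 (hbH.trans ht.1))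
    have := mul_le_mul_of_nonneg_right eH (sub_nonneg.2 ht.1)
    apply le_of_mul_le_mul_right _ (sub_pos.2 hbH')
    linarith
  have hone := D.one
  have t3 := D.tl_add u u' m le_rfl ha hab.le hb
  have t4 := D.tl_add u u' m le_rfl (ha.trans hab.le) hb le_rfl
  have t5 : massI f a b * tl u u' m (condMean f a b) = WI f u a b := by
    rw [← hmdef]; simp [tl, WI, ← hmdef]
  have t2 := D.W_le (u := u) (u' := u') (m := m) (ha.trans hab.le) hb le_rfl
    (fun h => hhigh _ (Ioo_subset_Icc_self (D.cm_mem (ha.trans hab.le) h le_rfl)))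
  have t1 := D.W_le (u := u) (u' := u') (m := m) le_rfl ha (hab.le.trans hb)
    (fun h => hlow _ (Ioo_subset_Icc_self (D.cm_mem le_rfl h (hab.le.trans hb))))
  have t6 : WI f u 0 1 = u (condMean f 0 1) := by simp [WI, hone]
  rw [hone, one_mul] at t4
  rw [t6]
  rcases le_total θL (condMean f 0 1) with h | h
  · have := tl_le S.d2 S.a2 hm (t := condMean f 0 1) ⟨h, hM⟩
    linarith
  · have q1 := D.mom_le le_rfl ha (hab.le.trans hb)
    have q3 := D.mom_le (ha.trans hab.le) hb le_rfl
    have r1 := D.mass_mul le_rfl ha (hab.le.trans hb)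
    have r2 := D.mass_mul ha hab.le hb
    have r3 := D.mass_mul (ha.trans hab.le) hb le_rfl
    have r0 := D.mass_mul le_rfl zero_le_one le_rfl
    have s1 := D.mass_add le_rfl ha hab.le hb
    have s2 := D.mass_add le_rfl (ha.trans hab.le) hb le_rfl
    have s3 := D.mom_add le_rfl ha hab.le hb
    have s4 := D.mom_add le_rfl (ha.trans hab.le) hb le_rfl
    have p1 := D.mass_nonneg le_rfl ha (hab.le.trans hb)
    have p2 := D.mass_nonneg ha hab.le hb
    have p3 := D.mass_nonneg (ha.trans hab.le) hb le_rfl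
    rw [hone] at r0 s2
    rw [← hmdef] at r2
    have bnd2 : θL * massI f a b ≤ momI f a b := by
      rw [← r2, mul_comm]; exact mul_le_mul_of_nonneg_left hm.1 p2
    have bnd3 : θL * massI f b 1 ≤ momI f b 1 :=
      (mul_le_mul_of_nonneg_right (S.h1.le.trans hbH) p3).trans q3.2
    -- `θL - M ≤ F₁ (θL - m₁)`
    have key : θL - condMean f 0 1 ≤ massI f 0 a * (θL - condMean f 0 a) := by
      have : massI f 0 a * (θL - condMean f 0 a) = θL * massI f 0 a - momI f 0 a := by
        rw [← r1]; ring
      rw [this]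
      have : θL = θL * massI f 0 a + θL * massI f a b + θL * massI f b 1 := by
        rw [← mul_add, ← mul_add, s1, s2, mul_one]
      linarith
    rcases ha.eq_or_lt with h3 | h3
    · subst h3
      have e0 : massI f 0 0 = 0 := by simp [massI]
      rw [e0, zero_mul] at key
      have : condMean f 0 1 = θL := by linarith
      rw [this] at t4 ⊢
      linarith
    · have hm1 := D.cm_mem le_rfl h3 (hab.le.trans hb)
      have hw1 := hlow _ (Ioo_subset_Icc_self hm1)
      set m1 := condMean f 0 a
      set M := condMean f 0 1
      have hm1M : m1 ≤ M := by
        have hLL : m1 ≤ θL := hm1.2.le.trans haL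
        have g1 : m1 * massI f a b ≤ momI f a b :=
          (mul_le_mul_of_nonneg_right hLL p2).trans bnd2
        have g3 : m1 * massI f b 1 ≤ momI f b 1 :=
          (mul_le_mul_of_nonneg_right hLL p3).trans bnd3
        have : m1 = m1 * massI f 0 a + m1 * massI f a b + m1 * massI f b 1 := by
          rw [← mul_add, ← mul_add, s1, s2, mul_one]
        clear_value m1 M
        clear * - this g1 g3 r0 r1 s3 s4
        linarith
      have c := conc3 S.d1 S.a1 hm1.1.le hm1M h le_rfl
      have e3 : tl u u' m M * (θL - m1) =
          tl u u' m m1 * (θL - M) + tl u u' m θL * (M - m1) := by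
        unfold tl; ring
      have e4 := mul_le_mul_of_nonneg_right eL (sub_nonneg.2 hm1M)
      have e5 : (tl u u' m m1 - u m1) * (θL - M) ≤
          (tl u u' m m1 - u m1) * (massI f 0 a * (θL - m1)) :=
        mul_le_mul_of_nonneg_left key (by linarith)
      have e6 : (tl u u' m M - massI f 0 a * (tl u u' m m1 - u m1)) * (θL - m1) ≤
          u M * (θL - m1) := by linarith
      have e7 := le_of_mul_le_mul_right e6 (by linarith [hm1.2])
      have e8 : WI f u 0 a = massI f 0 a * u m1 := rfl
      linarith

lemma vI_zero : vI f u 0 = WI f u 0 1 := by simp [vI, WI, massI]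

lemma vI_one : vI f u 1 = WI f u 0 1 := by simp [vI, WI, massI]

lemma Setup.three_d (S : Setup f u u' θL θH) {a b : ℝ} (ha : 0 ≤ a)
    (haL : a ≤ θL) (hbH : θH ≤ b) (hb : b ≤ 1) (hm : condMean f a b ≤ θL) :
    WI f u 0 a + WI f u a b + WI f u b 1 ≤ vI f u b := by
  have D := S.dens
  have h0 := S.h0
  have h1 := S.h1
  have hab : a < b := by linarith
  have : WI f u 0 a + WI f u a b ≤ WI f u 0 b := by
    apply D.merge le_rfl ha hab.le hb S.d1 S.a1
    · intro h
      have := D.cm_mem le_rfl h (by linarith)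
      exact ⟨this.1.le, by linarith [this.2]⟩
    · intro h
      have := D.cm_mem ha h hb
      exact ⟨by linarith [this.1], hm⟩
  unfold vI
  linarith

lemma Setup.three (S : Setup f u u' θL θH) {a b : ℝ} (ha : 0 ≤ a)
    (haL : a ≤ θL) (hbH : θH ≤ b) (hb : b ≤ 1) :
    ∃ z ∈ Icc (0:ℝ) 1, WI f u 0 a + WI f u a b + WI f u b 1 ≤ vI f u z := by
  have D := S.dens
  have h1 := S.h1
  have e := D.refl_cm (x := 1 - b) (y := 1 - a) (by linarith) (by linarith) (by linarith)
  simp only [sub_sub_cancel] at e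
  rcases le_total (condMean f a b) θL with hmL | hmL
  · exact ⟨b, ⟨by linarith, hb⟩, S.three_d ha haL hbH hb hmL⟩
  rcases le_total θH (condMean f a b) with hmH | hmH
  · have hv := S.reflect.three_d (a := 1 - b) (b := 1 - a) (by linarith) (by linarith)
      (by linarith) (by linarith) (by rw [e]; linarith)
    refine ⟨a, ⟨ha, by linarith⟩, ?_⟩
    unfold vI at *
    rw [D.refl_W u le_rfl (by linarith) (by linarith),
      D.refl_W u (by linarith) (by linarith) (by linarith),
      D.refl_W u (by linarith) (by linarith) (by linarith),
      D.refl_W u (by linarith) (by linarith) (by linarith)] at hv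
    simp only [sub_sub_cancel, sub_zero, sub_self] at hv
    linarith
  by_cases hwa : tl u u' (condMean f a b) a ≤ u a
  · exact S.three_a ha haL hbH hb ⟨hmL, hmH⟩ hwa
  by_cases hwb : tl u u' (condMean f a b) b ≤ u b
  · exact S.three_b ha haL hbH hb ⟨hmL, hmH⟩ hwb
  push Not at hwa hwb
  refine ⟨0, by simp, ?_⟩
  rw [vI_zero]
  rcases le_total (condMean f 0 1) θH with hM | hM
  · exact S.three_c ha haL hbH hb ⟨hmL, hmH⟩ hwa hwb hM
  · have e2 := D.refl_cm (x := 0) (y := 1) le_rfl zero_lt_one le_rfl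
    simp only [sub_self, sub_zero] at e2
    have hv := S.reflect.three_c (a := 1 - b) (b := 1 - a) (by linarith) (by linarith)
      (by linarith) (by linarith) (by rw [e]; exact ⟨by linarith, by linarith⟩)
      (by rw [refl_tl, e]; simpa using hwb) (by rw [refl_tl, e]; simpa using hwa)
      (by rw [e2]; linarith)
    rw [D.refl_W u le_rfl (by linarith) (by linarith),
      D.refl_W u (by linarith) (by linarith) (by linarith),
      D.refl_W u (by linarith) (by linarith) (by linarith),
      D.refl_W u le_rfl zero_le_one le_rfl] at hv
    simp only [sub_sub_cancel, sub_zero, sub_self] at hv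
    linarith

end three

/-! ### Components of pooling sets -/

lemma pool_nbr {P : Set ℝ} (hP : IsPoolingSet P) {θ : ℝ} (hθ : θ ∈ P) :
    ∃ δ > 0, ∀ t ∈ Icc (0:ℝ) 1, |t - θ| ≤ δ → t ∈ P := by
  obtain ⟨U, hU, rfl⟩ := hP
  obtain ⟨ε, hε, h⟩ := Metric.isOpen_iff.1 hU θ hθ.1
  refine ⟨ε / 2, by linarith, fun t ht hd => ⟨h ?_, ht⟩⟩
  rw [Metric.mem_ball, Real.dist_eq]
  linarith

lemma pool_sub {P : Set ℝ} (hP : IsPoolingSet P) : P ⊆ Icc 0 1 := by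
  obtain ⟨U, hU, rfl⟩ := hP
  exact inter_subset_right

lemma comp_oc (P : Set ℝ) (θ : ℝ) : (connectedComponentIn P θ).OrdConnected :=
  isPreconnected_connectedComponentIn.ordConnected

lemma sub_comp {P : Set ℝ} {x y θ : ℝ} (h : Icc x y ⊆ P) (hθ : θ ∈ Icc x y) :
    Icc x y ⊆ connectedComponentIn P θ :=
  isPreconnected_Icc.subset_connectedComponentIn hθ h

structure CompSpec (P : Set ℝ) (θ a b : ℝ) : Prop where
  a0 : 0 ≤ a
  b1 : b ≤ 1
  ab : a < b
  sub : connectedComponentIn P θ ⊆ Icc a b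
  sup : Ioo a b ⊆ connectedComponentIn P θ
  aP : a ∉ P ∨ a = 0
  bP : b ∉ P ∨ b = 1

lemma comp_spec {P : Set ℝ} (hP : IsPoolingSet P) {θ : ℝ} (hθ : θ ∈ P) :
    CompSpec P θ (compInf P θ) (compSup P θ) := by
  have hs := (connectedComponentIn_subset P θ)
  have hs1 := hs.trans (pool_sub hP)
  have hmem := mem_connectedComponentIn hθ
  have hbb : BddBelow (connectedComponentIn P θ) := ⟨0, fun t ht => (hs1 ht).1⟩
  have hba : BddAbove (connectedComponentIn P θ) := ⟨1, fun t ht => (hs1 ht).2⟩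
  have ha0 : 0 ≤ compInf P θ := le_csInf ⟨θ, hmem⟩ fun t ht => (hs1 ht).1
  have hb1 : compSup P θ ≤ 1 := csSup_le ⟨θ, hmem⟩ fun t ht => (hs1 ht).2
  have hsub : connectedComponentIn P θ ⊆ Icc (compInf P θ) (compSup P θ) := fun t ht =>
    ⟨csInf_le hbb ht, le_csSup hba ht⟩
  have hsup : Ioo (compInf P θ) (compSup P θ) ⊆ connectedComponentIn P θ := by
    intro t ht
    obtain ⟨x, hx, h1⟩ := exists_lt_of_csInf_lt ⟨θ, hmem⟩ ht.1
    obtain ⟨y, hy, h2⟩ := exists_lt_of_lt_csSup ⟨θ, hmem⟩ ht.2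
    exact (comp_oc P θ).out hx hy ⟨h1.le, h2.le⟩
  have hθ1 := hsub hmem
  have hθ01 := hs1 hmem
  refine ⟨ha0, hb1, ?_, hsub, hsup, ?_, ?_⟩
  · obtain ⟨δ, hδ, h⟩ := pool_nbr hP hθ
    rcases hθ01.2.lt_or_eq with h1 | h1
    · have hI : Icc θ (min (θ + δ) 1) ⊆ P := by
        intro t ht
        have := ht.2.trans (min_le_left _ _)
        have h3 := ht.2.trans (min_le_right _ _)
        exact h t ⟨hθ01.1.trans ht.1, h3⟩ (by rw [abs_le]; constructor <;> linarith [ht.1])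
      have hlt : θ < min (θ + δ) 1 := lt_min (by linarith) h1
      have := (hsub (sub_comp hI ⟨le_rfl, hlt.le⟩ ⟨hlt.le, le_rfl⟩)).2
      linarith [hθ1.1]
    · have hI : Icc (max (θ - δ) 0) θ ⊆ P := by
        intro t ht
        have := (le_max_left _ _).trans ht.1
        have h3 := (le_max_right _ _).trans ht.1
        exact h t ⟨h3, ht.2.trans hθ01.2⟩ (by rw [abs_le]; constructor <;> linarith [ht.2])
      have hlt : max (θ - δ) 0 < θ := max_lt (by linarith) (by linarith)
      have := (hsub (sub_comp hI ⟨hlt.le, le_rfl⟩ ⟨le_rfl, hlt.le⟩)).1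
      linarith [hθ1.2]
  · by_contra hc
    push Not at hc
    obtain ⟨haP, hne⟩ := hc
    have hpos : 0 < compInf P θ := lt_of_le_of_ne ha0 (Ne.symm hne)
    obtain ⟨δ, hδ, h⟩ := pool_nbr hP haP
    have hI : Icc (max (compInf P θ - δ) 0) θ ⊆ P := by
      intro t ht
      have h2 := (le_max_left _ _).trans ht.1
      have h3 := (le_max_right _ _).trans ht.1
      rcases le_or_gt t (compInf P θ) with h4 | h4
      · exact h t ⟨h3, ht.2.trans hθ01.2⟩ (by rw [abs_le]; constructor <;> linarith)
      · obtain ⟨x, hx, h1⟩ := exists_lt_of_csInf_lt ⟨θ, hmem⟩ h4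
        exact hs ((comp_oc P θ).out hx hmem ⟨h1.le, ht.2⟩)
    have hlt : max (compInf P θ - δ) 0 < compInf P θ := max_lt (by linarith) (by linarith)
    have hle := hlt.le.trans hθ1.1
    have := (hsub (sub_comp hI ⟨hle, le_rfl⟩ ⟨le_rfl, hle⟩)).1
    linarith
  · by_contra hc
    push Not at hc
    obtain ⟨haP, hne⟩ := hc
    have hpos : compSup P θ < 1 := lt_of_le_of_ne hb1 hne
    obtain ⟨δ, hδ, h⟩ := pool_nbr hP haP
    have hI : Icc θ (min (compSup P θ + δ) 1) ⊆ P := by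
      intro t ht
      have h2 := ht.2.trans (min_le_left _ _)
      have h3 := ht.2.trans (min_le_right _ _)
      rcases le_or_gt (compSup P θ) t with h4 | h4
      · exact h t ⟨hθ01.1.trans ht.1, h3⟩ (by rw [abs_le]; constructor <;> linarith)
      · obtain ⟨x, hx, h1⟩ := exists_lt_of_lt_csSup ⟨θ, hmem⟩ h4
        exact hs ((comp_oc P θ).out hmem hx ⟨ht.1, h1.le⟩)
    have hlt : compSup P θ < min (compSup P θ + δ) 1 := lt_min (by linarith) (by linarith)
    have hle := hθ1.2.trans hlt.le
    have := (hsub (sub_comp hI ⟨le_rfl, hle⟩ ⟨hle, le_rfl⟩)).2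
    linarith

lemma comp_le {P : Set ℝ} {θ c : ℝ} (hθ : θ ∈ P) (hc : c ∉ P)
    (h : θ ≤ c) : ∀ t ∈ connectedComponentIn P θ, t ≤ c := by
  intro t ht
  by_contra h2
  push Not at h2
  exact hc (connectedComponentIn_subset P θ
    ((comp_oc P θ).out (mem_connectedComponentIn hθ) ht ⟨h, h2.le⟩))

lemma comp_ge {P : Set ℝ} {θ c : ℝ} (hθ : θ ∈ P) (hc : c ∉ P)
    (h : c ≤ θ) : ∀ t ∈ connectedComponentIn P θ, c ≤ t := by
  intro t ht
  by_contra h2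
  push Not at h2
  exact hc (connectedComponentIn_subset P θ
    ((comp_oc P θ).out ht (mem_connectedComponentIn hθ) ⟨h2.le, h⟩))

lemma poolMean_mem {f : ℝ → ℝ} (D : Dens f) {P : Set ℝ} (hP : IsPoolingSet P) {θ : ℝ}
    (hθ : θ ∈ P) : poolMean f P θ ∈ Ioo (compInf P θ) (compSup P θ) := by
  have S := comp_spec hP hθ
  rw [poolMean, if_pos hθ]
  exact D.cm_mem S.a0 S.ab S.b1

lemma poolMean_le {f : ℝ → ℝ} (D : Dens f) {P : Set ℝ} (hP : IsPoolingSet P) {θ c : ℝ}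
    (hc : c ∉ P) (h : θ ≤ c) : poolMean f P θ ≤ c := by
  by_cases hθ : θ ∈ P
  · have := csSup_le ⟨θ, mem_connectedComponentIn hθ⟩ (comp_le hθ hc h)
    exact (poolMean_mem D hP hθ).2.le.trans this
  · rwa [poolMean, if_neg hθ]

lemma poolMean_ge {f : ℝ → ℝ} (D : Dens f) {P : Set ℝ} (hP : IsPoolingSet P) {θ c : ℝ}
    (hc : c ∉ P) (h : c ≤ θ) : c ≤ poolMean f P θ := by
  by_cases hθ : θ ∈ P
  · have := le_csInf ⟨θ, mem_connectedComponentIn hθ⟩ (comp_ge hθ hc h)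
    exact this.trans (poolMean_mem D hP hθ).1.le
  · rwa [poolMean, if_neg hθ]

lemma poolMean_01 {f : ℝ → ℝ} (D : Dens f) {P : Set ℝ} (hP : IsPoolingSet P) {θ : ℝ}
    (h : θ ∈ Icc (0:ℝ) 1) : poolMean f P θ ∈ Icc (0:ℝ) 1 := by
  by_cases hθ : θ ∈ P
  · have := poolMean_mem D hP hθ
    have S := comp_spec hP hθ
    exact ⟨S.a0.trans this.1.le, this.2.le.trans S.b1⟩
  · rwa [poolMean, if_neg hθ]

lemma poolMean_mono {f : ℝ → ℝ} (D : Dens f) {P : Set ℝ} (hP : IsPoolingSet P) :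
    Monotone (poolMean f P) := by
  intro x y h
  by_cases hc : ∃ c ∈ Icc x y, c ∉ P
  · obtain ⟨c, hc, hcP⟩ := hc
    exact (poolMean_le D hP hcP hc.1).trans (poolMean_ge D hP hcP hc.2)
  · push Not at hc
    have hy := sub_comp (θ := x) hc ⟨le_rfl, h⟩ ⟨h, le_rfl⟩
    have e := connectedComponentIn_eq hy
    rw [poolMean, poolMean, if_pos (hc x ⟨le_rfl, h⟩), if_pos (hc y ⟨h, le_rfl⟩),
      compInf, compInf, compSup, compSup, e]

lemma CompSpec.ae {P : Set ℝ} {θ a b : ℝ} (S : CompSpec P θ a b) :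
    connectedComponentIn P θ =ᵐ[volume] Ioc a b := by
  have h1 : (Ioo a b : Set ℝ) =ᵐ[volume] Ioc a b := Ioo_ae_eq_Ioc
  have h2 : (Ioc a b : Set ℝ) =ᵐ[volume] Icc a b := Ioc_ae_eq_Icc
  apply Filter.EventuallyLE.antisymm
  · exact (LE.le.eventuallyLE S.sub).trans h2.symm.le
  · exact h1.symm.le.trans (LE.le.eventuallyLE S.sup)

lemma poolMean_on {f : ℝ → ℝ} {P : Set ℝ} {θ t : ℝ} 
    (ht : t ∈ connectedComponentIn P θ) :
    poolMean f P t = condMean f (compInf P θ) (compSup P θ) := by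
  have e := connectedComponentIn_eq ht
  rw [poolMean, if_pos (connectedComponentIn_subset P θ ht), compInf, compSup, ← e]
  rfl

lemma comp_int {f : ℝ → ℝ} {P : Set ℝ} (hP : IsPoolingSet P) {θ : ℝ}
    (hθ : θ ∈ P) (φ : ℝ → ℝ → ℝ) :
    ∫ t in connectedComponentIn P θ, φ t (poolMean f P t) =
      ∫ t in (compInf P θ)..(compSup P θ), φ t (condMean f (compInf P θ) (compSup P θ)) := by
  have S := comp_spec hP hθ
  rw [intervalIntegral.integral_of_le S.ab.le, ← setIntegral_congr_set S.ae]
  apply setIntegral_congr_fun (comp_oc P θ).measurableSet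
  intro t ht
  simp only
  rw [poolMean_on ht]

lemma pool_good {f : ℝ → ℝ} (D : Dens f) {P : Set ℝ} (hP : IsPoolingSet P) {a b : ℝ}
    (ha : 0 ≤ a) (hab : a ≤ b) (hb : b ≤ 1) (haP : a ∉ P ∨ a = 0) (hbP : b ∉ P ∨ b = 1) :
    Good f (poolMean f P) a b := by
  have hmaps : ∀ t ∈ Icc a b, poolMean f P t ∈ Icc a b := by
    intro t ht
    have h01 := poolMean_01 D hP (θ := t) ⟨ha.trans ht.1, ht.2.trans hb⟩
    constructor
    · rcases haP with h | h
      · exact poolMean_ge D hP h ht.1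
      · rw [h]; exact h01.1
    · rcases hbP with h | h
      · exact poolMean_le D hP h ht.2
      · rw [h]; exact h01.2
  refine ⟨hmaps, (poolMean_mono D hP).monotoneOn _, ?_⟩
  intro g hg
  have hintg : IntervalIntegrable (fun t => g (poolMean f P t) * (t - poolMean f P t) * f t)
      volume a b := by
    apply D.ii_mono ha hab hb (K := b - a) (h := fun t => g (poolMean f P t))
      (k := fun t => t - poolMean f P t)
    · intro x hx y hy h
      exact hg (hmaps x hx) (hmaps y hy) (poolMean_mono D hP h)
    · exact aemeasurable_id.sub (poolMean_mono D hP).measurable.aemeasurable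
    · intro t ht
      have := hmaps t ht
      rw [abs_le]; constructor <;> linarith [ht.1, ht.2, this.1, this.2]
  rw [intervalIntegral.integral_of_le hab, ← integral_Icc_eq_integral_Ioc]
  rw [intervalIntegrable_iff_integrableOn_Icc_of_le hab] at hintg
  have hsub : ∀ θ ∈ P ∩ Icc a b, connectedComponentIn P θ ⊆ P ∩ Icc a b := by
    intro θ hθ t ht
    have htP := connectedComponentIn_subset P θ ht
    refine ⟨htP, ?_, ?_⟩
    · rcases haP with h | h
      · exact comp_ge hθ.1 h hθ.2.1 t ht
      · rw [h]; exact (pool_sub hP htP).1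
    · rcases hbP with h | h
      · exact comp_le hθ.1 h hθ.2.2 t ht
      · rw [h]; exact (pool_sub hP htP).2
  set K : Set (Set ℝ) := connectedComponentIn P '' (P ∩ Icc a b) with hK
  have hKdis : K.PairwiseDisjoint id := by
    rintro _ ⟨x, hx, rfl⟩ _ ⟨y, hy, rfl⟩ hne
    rw [Function.onFun, id, id, Set.disjoint_left]
    intro t h1 h2
    exact hne ((connectedComponentIn_eq h1).trans (connectedComponentIn_eq h2).symm)
  have hKc : K.Countable := by
    apply hKdis.countable_of_nonempty_interior
    rintro _ ⟨x, hx, rfl⟩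
    have S := comp_spec hP hx.1
    exact (nonempty_Ioo.2 S.ab).mono (interior_maximal S.sup isOpen_Ioo)
  have hKU : (⋃ s : K, (s : Set ℝ)) = P ∩ Icc a b := by
    ext t
    simp only [mem_iUnion]
    constructor
    · rintro ⟨⟨_, x, hx, rfl⟩, ht⟩
      exact hsub x hx ht
    · intro ht
      exact ⟨⟨_, t, ht, rfl⟩, mem_connectedComponentIn ht.1⟩
  have : Countable K := hKc
  have hsum := hasSum_integral_iUnion (μ := volume) (s := fun s : K => (s : Set ℝ))
    (f := fun t => g (poolMean f P t) * (t - poolMean f P t) * f t)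
    (by rintro ⟨_, x, hx, rfl⟩; exact (comp_oc P x).measurableSet)
    (by
      intro s t hst
      exact hKdis s.2 t.2 (fun h => hst (Subtype.ext h)))
    (by rw [hKU]; exact hintg.mono_set inter_subset_right)
  rw [hKU] at hsum
  have hz : ∀ s : K, ∫ t in (s : Set ℝ), g (poolMean f P t) * (t - poolMean f P t) * f t = 0 := by
    rintro ⟨_, x, hx, rfl⟩
    have S := comp_spec hP hx.1
    have := comp_int (f := f) hP hx.1 (fun t m => g m * (t - m) * f t)
    simp only at this ⊢
    rw [this]
    have hxs : ∀ t ∈ Icc (compInf P x) (compSup P x), t ∈ Icc a b := by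
      have h1 : Ioo (compInf P x) (compSup P x) ⊆ Icc a b :=
        S.sup.trans ((hsub x hx).trans inter_subset_right)
      have h2 := closure_minimal h1 isClosed_Icc
      rwa [closure_Ioo S.ab.ne] at h2
    exact (Good.const_good D S.a0 S.ab S.b1).mart g (hg.mono hxs)
  simp only [hz] at hsum
  have h0 := hsum.unique hasSum_zero
  rw [← h0]
  apply setIntegral_eq_of_subset_of_forall_sdiff_eq_zero measurableSet_Icc inter_subset_right
  intro t ht
  have : t ∉ P := fun h => ht.2 ⟨h, ht.1⟩
  rw [poolMean, if_neg this]; simp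

/-! ### Bounding the value of a pooling set by two-interval poolings -/

lemma Setup.pool_bound {f u u' : ℝ → ℝ} {θL θH : ℝ} (S : Setup f u u' θL θH) {P : Set ℝ}
    (hP : IsPoolingSet P) : ∃ z ∈ Icc (0:ℝ) 1, poolValue f u P ≤ vI f u z := by
  have D := S.dens
  have h0 := S.h0
  have h1 := S.h1
  have h2 := S.h2
  have G01 := pool_good D hP le_rfl zero_le_one le_rfl (Or.inr rfl) (Or.inr rfl)
  have hintg := D.ii_cont_comp le_rfl zero_le_one le_rfl G01.mono G01.maps S.ucont
  have hadd : ∀ {a b c : ℝ}, 0 ≤ a → a ≤ c → c ≤ b → b ≤ 1 →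
      ∫ t in a..b, u (poolMean f P t) * f t =
      (∫ t in a..c, u (poolMean f P t) * f t) + ∫ t in c..b, u (poolMean f P t) * f t := by
    intro a b c ha hac hcb hb
    symm
    apply intervalIntegral.integral_add_adjacent_intervals
    · apply hintg.mono_set
      rw [uIcc_of_le hac, uIcc_of_le zero_le_one]
      exact Icc_subset_Icc ha (hcb.trans hb)
    · apply hintg.mono_set
      rw [uIcc_of_le hcb, uIcc_of_le zero_le_one]
      exact Icc_subset_Icc (ha.trans hac) hb
  by_cases hc : ∃ c ∈ Icc θL θH, c ∉ P
  · obtain ⟨c, hc, hcP⟩ := hc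
    have c0 : 0 ≤ c := h0.le.trans hc.1
    have c1 : c ≤ 1 := hc.2.trans h2.le
    have G := pool_good D hP le_rfl c0 c1 (Or.inr rfl) (Or.inl hcP)
    have H := pool_good D hP c0 c1 le_rfl (Or.inl hcP) (Or.inr rfl)
    obtain ⟨z, hz, hle⟩ := S.split hc G H
    refine ⟨z, hz, ?_⟩
    rw [poolValue, hadd le_rfl c0 c1 le_rfl]
    exact hle
  · push Not at hc
    have hL : θL ∈ P := hc θL ⟨le_rfl, h1.le⟩
    have C := comp_spec hP hL
    have hsub := (sub_comp (θ := θL) hc ⟨le_rfl, h1.le⟩).trans C.sub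
    have haL : compInf P θL ≤ θL := (hsub ⟨le_rfl, h1.le⟩).1
    have hbH : θH ≤ compSup P θL := (hsub ⟨h1.le, le_rfl⟩).2
    have hmid := comp_int (f := f) hP hL (fun t m => u m * f t)
    have C0 := C.a0
    have C1 := C.b1
    have Cab := C.ab
    have hmid2 : ∫ t in (compInf P θL)..(compSup P θL), u (poolMean f P t) * f t =
        WI f u (compInf P θL) (compSup P θL) := by
      rw [intervalIntegral.integral_of_le Cab.le, ← setIntegral_congr_set C.ae, hmid]
      simp only [WI, massI, intervalIntegral.integral_const_mul]
      ring
    obtain ⟨z, hz, hle⟩ := S.three C0 haL hbH C1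
    refine ⟨z, hz, ?_⟩
    rw [poolValue, hadd le_rfl C0 (Cab.le.trans C1) le_rfl,
      hadd C0 Cab.le C1 le_rfl, hmid2]
    set a := compInf P θL
    set b := compSup P θL
    have t1 : ∫ t in (0:ℝ)..a, u (poolMean f P t) * f t ≤ WI f u 0 a := by
      rcases C0.eq_or_lt with h | h
      · rw [← h]; simp [WI, massI]
      · have hm := D.cm_mem le_rfl h (Cab.le.trans C1)
        have G := pool_good D hP le_rfl C0 (Cab.le.trans C1) (Or.inr rfl)
          (Or.inl (C.aP.resolve_right h.ne'))
        have := G.cert_tl D le_rfl C0 (Cab.le.trans C1) (u := u) (u' := u')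
          (m := condMean f 0 a)
          (S.ucont.mono (Icc_subset_Icc le_rfl (Cab.le.trans C1)))
          (fun t ht => tl_ge S.d1 S.a1 ⟨hm.1.le, hm.2.le.trans haL⟩ ⟨ht.1, ht.2.trans haL⟩)
        simpa [tl, WI] using this
    have t3 : ∫ t in b..1, u (poolMean f P t) * f t ≤ WI f u b 1 := by
      rcases C1.eq_or_lt with h | h
      · rw [h]; simp [WI, massI]
      · have hm := D.cm_mem (C0.trans Cab.le) h le_rfl
        have H := pool_good D hP (C0.trans Cab.le) C1 le_rfl
          (Or.inl (C.bP.resolve_right h.ne)) (Or.inr rfl)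
        have := H.cert_tl D (C0.trans Cab.le) C1 le_rfl (u := u) (u' := u')
          (m := condMean f b 1)
          (S.ucont.mono (Icc_subset_Icc (C0.trans Cab.le) le_rfl))
          (fun t ht => tl_ge S.d3 S.a3 ⟨hbH.trans hm.1.le, hm.2.le⟩ ⟨hbH.trans ht.1, ht.2⟩)
        simpa [tl, WI] using this
    linarith

/-! ### The best two-interval pooling -/

lemma W_cont {f u : ℝ → ℝ} (D : Dens f) (hu : ContinuousOn u (Icc 0 1)) :
    ContinuousOn (fun z => WI f u 0 z) (Icc 0 1) := by
  intro z hz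
  have hmem : ∀ t ∈ Ioc (0:ℝ) 1, condMean f 0 t ∈ Icc (0:ℝ) 1 := fun t ht => by
    have := D.cm_mem le_rfl ht.1 ht.2
    exact ⟨this.1.le, this.2.le.trans ht.2⟩
  rcases hz.1.eq_or_lt with h | h
  · subst h
    obtain ⟨K, hK⟩ := isCompact_Icc.exists_bound_of_continuousOn hu
    have e0 : WI f u 0 0 = 0 := by simp [WI, massI]
    have e1 : massI f 0 0 = 0 := by simp [massI]
    rw [ContinuousWithinAt, e0]
    have hm := D.mass_cont 0 hz
    rw [ContinuousWithinAt, e1] at hm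
    have hm2 := hm.mul_const K
    rw [zero_mul] at hm2
    apply squeeze_zero_norm' _ hm2
    filter_upwards [self_mem_nhdsWithin] with t ht
    rcases ht.1.eq_or_lt with h | h
    · rw [← h, e0, e1]; simp
    · have h3 := D.mass_nonneg le_rfl ht.1 ht.2
      rw [WI, norm_mul, Real.norm_of_nonneg h3]
      exact mul_le_mul_of_nonneg_left (hK _ (hmem t ⟨h, ht.2⟩)) h3
  · have hz' : z ∈ Ioc (0:ℝ) 1 := ⟨h, hz.2⟩
    have h1 : ContinuousOn (fun z => WI f u 0 z) (Ioc 0 1) :=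
      (D.mass_cont.mono Ioc_subset_Icc_self).mul (hu.comp D.cm_cont_left hmem)
    have h2 := h1 z hz'
    apply h2.mono_of_mem_nhdsWithin
    rw [mem_nhdsWithin]
    exact ⟨Ioi 0, isOpen_Ioi, h, fun t ht => ⟨ht.1, ht.2.2⟩⟩

lemma Setup.vI_cont {f u u' : ℝ → ℝ} {θL θH : ℝ} (S : Setup f u u' θL θH) :
    ContinuousOn (fun z => vI f u z) (Icc 0 1) := by
  have D := S.dens
  apply (W_cont D S.ucont).add
  have h1 := W_cont D.reflect S.reflect.ucont
  have h2 : ContinuousOn (fun z : ℝ => 1 - z) (Icc 0 1) := by fun_prop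
  have h3 := h1.comp h2 (fun t ht => ⟨by linarith [ht.2], by linarith [ht.1]⟩)
  apply h3.congr
  intro z hz
  simp only [Function.comp]
  rw [D.refl_W u le_rfl (by linarith [hz.2]) (by linarith [hz.1])]
  simp

lemma Setup.foc1 {f u u' : ℝ → ℝ} {θL θH : ℝ} (S : Setup f u u' θL θH) {z : ℝ}
    (hz : z ∈ Ioo (0:ℝ) 1)
    (hd : tl u u' (condMean f z 1) z < tl u u' (condMean f 0 z) z) :
    ∃ y ∈ Icc (0:ℝ) 1, vI f u z < vI f u y := by
  have D := S.dens
  have hL := D.cm_mem le_rfl hz.1 hz.2.le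
  have hH := D.cm_mem hz.1.le hz.2 le_rfl
  have cL : ContinuousAt (fun x => condMean f 0 x) z :=
    D.cm_cont_left.continuousAt (Ioc_mem_nhds hz.1 hz.2)
  have cH : ContinuousAt (fun x => condMean f x 1) z :=
    (D.cm_cont_lower le_rfl).continuousAt (Ico_mem_nhds hz.1 hz.2)
  set mL := condMean f 0 z with hmL
  set mH := condMean f z 1 with hmH
  set d := tl u u' mL z - tl u u' mH z with hdd
  have hdp : 0 < d := sub_pos.2 hd
  have oL := (S.der mL ⟨hL.1.le, (hL.2.trans hz.2).le⟩).isLittleO.def (show 0 < d / 5 by linarith)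
  have oH := (S.der mH ⟨(hz.1.trans hH.1).le, hH.2.le⟩).isLittleO.def (show 0 < d / 5 by linarith)
  have eL := cL.tendsto.eventually oL
  have eH := cH.tendsto.eventually oH
  have hc : ContinuousAt (fun t => tl u u' mL t - tl u u' mH t) z := by
    unfold tl; fun_prop
  obtain ⟨δ, hδ, hball⟩ := Metric.eventually_nhds_iff.1
    (hc.tendsto.eventually (lt_mem_nhds (show d - d / 5 < tl u u' mL z - tl u u' mH z by linarith)))
  have ev : ∀ᶠ y in nhdsWithin z (Ioi z), y ∈ Ioo z (min 1 (z + δ)) :=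
    Ioo_mem_nhdsGT (lt_min hz.2 (by linarith))
  obtain ⟨y, ⟨hy, fL⟩, fH⟩ := ((ev.and (eL.filter_mono nhdsWithin_le_nhds)).and
    (eH.filter_mono nhdsWithin_le_nhds)).exists
  have hy1 : y < 1 := hy.2.trans_le (min_le_left _ _)
  have hyδ : y < z + δ := hy.2.trans_le (min_le_right _ _)
  have hb := D.cm_mem hz.1.le hy.1 hy1.le
  have hball := hball (y := condMean f z y) (by
    rw [Real.dist_eq, abs_lt]; constructor <;> linarith [hb.1, hb.2])
  have hΔ := D.mass_pos hz.1.le hy.1 hy1.le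
  refine ⟨y, ⟨hz.1.le.trans hy.1.le, hy1.le⟩, ?_⟩
  have a1 := D.tl_add u u' mL le_rfl hz.1.le hy.1.le hy1.le
  have a2 := D.tl_add u u' mH hz.1.le hy.1.le hy1.le le_rfl
  have w1 : massI f 0 z * tl u u' mL (condMean f 0 z) = WI f u 0 z := by
    simp [tl, WI, ← hmL]
  have w2 : massI f z 1 * tl u u' mH (condMean f z 1) = WI f u z 1 := by
    simp [tl, WI, ← hmH]
  have p1 := D.mass_nonneg le_rfl (hz.1.le.trans hy.1.le) hy1.le
  have p2 := D.mass_nonneg (hz.1.le.trans hy.1.le) hy1.le le_rfl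
  have r1 : massI f 0 y * (condMean f 0 y - mL) = massI f z y * (condMean f z y - mL) := by
    have := D.mass_mul le_rfl (hz.1.le.trans hy.1.le) hy1.le
    have := D.mass_mul hz.1.le hy.1.le hy1.le
    have := D.mass_mul le_rfl hz.1.le hz.2.le
    have := D.mass_add le_rfl hz.1.le hy.1.le hy1.le
    have := D.mom_add le_rfl hz.1.le hy.1.le hy1.le
    rw [← hmL] at *
    grind
  have r2 : massI f y 1 * (condMean f y 1 - mH) = - (massI f z y * (condMean f z y - mH)) := by
    have := D.mass_mul (hz.1.le.trans hy.1.le) hy1.le le_rfl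
    have := D.mass_mul hz.1.le hy.1.le hy1.le
    have := D.mass_mul hz.1.le hz.2.le le_rfl
    have := D.mass_add hz.1.le hy.1.le hy1.le le_rfl
    have := D.mom_add hz.1.le hy.1.le hy1.le le_rfl
    rw [← hmH] at *
    grind
  have s1 : massI f 0 y * |condMean f 0 y - mL| ≤ massI f z y := by
    rw [← abs_of_nonneg p1, ← abs_mul, r1, abs_mul, abs_of_pos hΔ]
    apply mul_le_of_le_one_right hΔ.le
    rw [abs_le]; constructor <;> linarith [hb.1, hb.2, hL.1, hL.2, hz.1]
  have s2 : massI f y 1 * |condMean f y 1 - mH| ≤ massI f z y := by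
    rw [← abs_of_nonneg p2, ← abs_mul, r2, abs_neg, abs_mul, abs_of_pos hΔ]
    apply mul_le_of_le_one_right hΔ.le
    rw [abs_le]; constructor <;> linarith [hb.1, hb.2, hH.1, hH.2, hz.1]
  simp only [Real.norm_eq_abs, smul_eq_mul] at fL fH
  have v1 : massI f 0 y * tl u u' mL (condMean f 0 y) - d / 5 * massI f z y ≤ WI f u 0 y := by
    have h1 := (abs_le.1 fL).1
    have h2 := mul_le_mul_of_nonneg_left h1 p1
    have h3 := mul_le_mul_of_nonneg_left s1 (show 0 ≤ d / 5 by linarith)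
    unfold WI tl
    linarith
  have v2 : massI f y 1 * tl u u' mH (condMean f y 1) - d / 5 * massI f z y ≤ WI f u y 1 := by
    have h1 := (abs_le.1 fH).1
    have h2 := mul_le_mul_of_nonneg_left h1 p2
    have h3 := mul_le_mul_of_nonneg_left s2 (show 0 ≤ d / 5 by linarith)
    unfold WI tl
    linarith
  have v3 := mul_lt_mul_of_pos_left hball hΔ
  have v4 := mul_pos hΔ hdp
  unfold vI
  linarith

lemma Setup.foc {f u u' : ℝ → ℝ} {θL θH : ℝ} (S : Setup f u u' θL θH) {z : ℝ}
    (hz : z ∈ Ioo (0:ℝ) 1) (hmax : ∀ y ∈ Icc (0:ℝ) 1, vI f u y ≤ vI f u z) :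
    tl u u' (condMean f 0 z) z = tl u u' (condMean f z 1) z := by
  have D := S.dens
  rcases lt_trichotomy (tl u u' (condMean f 0 z) z) (tl u u' (condMean f z 1) z) with h | h | h
  · exfalso
    have hz2 : 1 - z ∈ Ioo (0:ℝ) 1 := ⟨by linarith [hz.2], by linarith [hz.1]⟩
    have hv : ∀ y ∈ Icc (0:ℝ) 1, vI (fun t => f (1 - t)) (fun t => u (1 - t)) y
        = vI f u (1 - y) := by
      intro y hy
      unfold vI
      rw [D.refl_W u le_rfl hy.1 hy.2, D.refl_W u hy.1 hy.2 le_rfl]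
      simp [add_comm]
    obtain ⟨y, hy, hlt⟩ := S.reflect.foc1 hz2 (by
      rw [refl_tl, refl_tl, D.refl_cm le_rfl hz2.1 hz2.2.le, D.refl_cm hz2.1.le hz2.2 le_rfl]
      simpa using h)
    rw [hv _ hy, hv _ (Ioo_subset_Icc_self hz2), sub_sub_cancel] at hlt
    have := hmax (1 - y) ⟨by linarith [hy.2], by linarith [hy.1]⟩
    linarith
  · exact h
  · exfalso
    obtain ⟨y, hy, hlt⟩ := S.foc1 hz h
    linarith [hmax y hy]

lemma poolValue_full (f u : ℝ → ℝ) :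
    poolValue f u (Icc 0 1) = WI f u 0 1 := by
  have hP : IsPoolingSet (Icc (0:ℝ) 1) := ⟨univ, isOpen_univ, by simp⟩
  have h0 : (0:ℝ) ∈ Icc (0:ℝ) 1 := by simp
  have e : connectedComponentIn (Icc (0:ℝ) 1) 0 = Icc 0 1 :=
    isPreconnected_Icc.connectedComponentIn h0
  have h := comp_int (f := f) hP h0 (fun t m => u m * f t)
  have e1 : compInf (Icc (0:ℝ) 1) 0 = 0 := by rw [compInf, e]; exact csInf_Icc zero_le_one
  have e2 : compSup (Icc (0:ℝ) 1) 0 = 1 := by rw [compSup, e]; exact csSup_Icc zero_le_one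
  rw [e, e1, e2] at h
  rw [poolValue, intervalIntegral.integral_of_le zero_le_one, ← integral_Icc_eq_integral_Ioc, h]
  simp only [WI, massI, intervalIntegral.integral_const_mul]
  ring

/-- two inflection points, no two-sided tangency pair and no
admissible split point `θ_*^M`; then complete pooling `[0,1]` is optimal. -/
theorem complete_pooling_two_inflections (f : ℝ → ℝ) (hf : IsDensity f)
    (u u' u'' : ℝ → ℝ) (hu : C1AC u u' u'')
    (θL θH : ℝ) (hθL : θL ∈ Ioo (0:ℝ) 1) (hθH : θH ∈ Ioo (0:ℝ) 1) (hLH : θL < θH)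
    (hneg1 : ∀ θ ∈ Ico (0:ℝ) θL, u'' θ < 0)
    (hpos : ∀ θ ∈ Ioo θL θH, 0 < u'' θ)
    (hneg2 : ∀ θ ∈ Ioc θH (1:ℝ), u'' θ < 0)
    (hnopair : ¬ ∃ x ∈ Ioo θL θH, ∃ y ∈ Ioo θL θH, x < y ∧
      u (condMean f 0 x) + u' (condMean f 0 x) * (x - condMean f 0 x) = u x ∧
      u (condMean f y 1) + u' (condMean f y 1) * (y - condMean f y 1) = u y)
    (hnoM : ¬ ∃ z ∈ Ioo (0:ℝ) 1,
      u (condMean f 0 z) + u' (condMean f 0 z) * (z - condMean f 0 z)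
        = u (condMean f z 1) + u' (condMean f z 1) * (z - condMean f z 1) ∧
      u (∫ t in (0:ℝ)..1, t * f t) ≤
        u (condMean f 0 z) * cdfF f z + u (condMean f z 1) * (1 - cdfF f z)) :
    IsOptimal f u (Icc (0:ℝ) 1) := by
  obtain ⟨hder, hcont, hintg, hftc⟩ := hu
  have D : Dens f := ⟨hf.1, by
    rw [intervalIntegrable_iff_integrableOn_Icc_of_le zero_le_one]; exact hf.2.1, hf.2.2⟩
  have hii : IntervalIntegrable u'' volume 0 1 := by
    rw [intervalIntegrable_iff_integrableOn_Icc_of_le zero_le_one]; exact hintg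
  have hiis : ∀ {x y : ℝ}, 0 ≤ x → x ≤ y → y ≤ 1 → IntervalIntegrable u'' volume x y := by
    intro x y hx hxy hy
    apply hii.mono_set
    rw [uIcc_of_le hxy, uIcc_of_le zero_le_one]
    exact Icc_subset_Icc hx hy
  have hdiff : ∀ {x y : ℝ}, 0 ≤ x → x ≤ y → y ≤ 1 → u' y = u' x + ∫ t in x..y, u'' t := by
    intro x y hx hxy hy
    rw [hftc x ⟨hx, hxy.trans hy⟩, hftc y ⟨hx.trans hxy, hy⟩, add_assoc,
      intervalIntegral.integral_add_adjacent_intervals (hiis le_rfl hx (hxy.trans hy))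
        (hiis hx hxy hy)]
  have hneg : ∀ {x y : ℝ}, 0 ≤ x → x < y → y ≤ 1 → (∀ t ∈ Ioo x y, u'' t < 0) → u' y < u' x := by
    intro x y hx hxy hy h
    have h1 := intervalIntegral.intervalIntegral_pos_of_pos_on (hiis hx hxy.le hy).neg
      (fun t ht => neg_pos.2 (h t ht)) hxy
    simp only [Pi.neg_apply, intervalIntegral.integral_neg] at h1
    linarith [hdiff hx hxy.le hy]
  have S : Setup f u u' θL θH := by
    refine ⟨D, hder, hcont, hθL.1, hLH, hθH.2, ?_, ?_, ?_, ?_⟩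
    · intro x hx y hy hxy
      exact hneg hx.1 hxy (hy.2.trans hθL.2.le) fun t ht =>
        hneg1 t ⟨hx.1.trans ht.1.le, ht.2.trans_le hy.2⟩
    · intro x hx y hy hxy
      have h0 : 0 ≤ x := hθL.1.le.trans hx.1
      have h1 : y ≤ 1 := hy.2.trans hθH.2.le
      have := intervalIntegral.intervalIntegral_pos_of_pos_on (hiis h0 hxy.le h1)
        (fun t ht => hpos t ⟨hx.1.trans_lt ht.1, ht.2.trans_le hy.2⟩) hxy
      linarith [hdiff h0 hxy.le h1]
    · intro x hx y hy hxy
      exact hneg (hθH.1.le.trans hx.1) hxy hy.2 fun t ht =>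
        hneg2 t ⟨hx.1.trans_lt ht.1, ht.2.le.trans hy.2⟩
    · exact hnopair
  refine ⟨⟨univ, isOpen_univ, by simp⟩, fun Q hQ => ?_⟩
  rw [poolValue_full]
  obtain ⟨y, hy, hle⟩ := S.pool_bound hQ
  refine hle.trans ?_
  obtain ⟨z, hz, hmax⟩ := isCompact_Icc.exists_isMaxOn (nonempty_Icc.2 zero_le_one) S.vI_cont
  have hmax : ∀ y ∈ Icc (0:ℝ) 1, vI f u y ≤ vI f u z := fun y hy => hmax hy
  refine (hmax y hy).trans ?_
  rcases hz.1.eq_or_lt with h0 | h0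
  · rw [← h0, vI_zero]
  rcases hz.2.eq_or_lt with h1 | h1
  · rw [h1, vI_one]
  exfalso
  have hzz : z ∈ Ioo (0:ℝ) 1 := ⟨h0, h1⟩
  apply hnoM
  refine ⟨z, hzz, S.foc hzz hmax, ?_⟩
  have hm := hmax 0 (by simp)
  have hone := D.one
  have hadd := D.mass_add le_rfl h0.le h1.le le_rfl
  have e1 : condMean f 0 1 = ∫ t in (0:ℝ)..1, t * f t := by
    have := D.mass_mul le_rfl zero_le_one le_rfl
    rw [hone, one_mul] at this
    exact this
  have e2 : cdfF f z = massI f 0 z := rfl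
  have e3 : 1 - cdfF f z = massI f z 1 := by rw [e2]; linarith
  rw [vI_zero, WI, hone, one_mul, e1] at hm
  rw [e3, e2]
  unfold vI WI at hm
  linarith
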